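/- arXiv:2005.00984 — 6 statements merged into one kernel-verified Lean document; each statement's English description precedes it below -/
import Mathlib

section
/- For all integers n, p ≥ 1 and every integer s with −(p−1) ≤ s ≤ p−1, the cardinality of A_{2p,s} equals Σ_{k=0}^{p+s−1} (−1)^k C(2p, k) C((p+s−k)n + p − 1, 2p−1). -/
/-!
Replacing `i_k` by `n - i_k` at the positions carrying a minus sign turns the defining equation of
`A_{2p,s}` into `∑ e_k = (p+s) n`, where `e_k` runs over `{1,…,n}` at `p` of the positions and over
`{0,…,n-1}` at the other `p`. Hence the cardinality is the coefficient of `X^((p+s)n)` in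
`X^p (1 + X + ⋯ + X^(n-1))^(2p) = X^p (1 - X^n)^(2p) (1 - X)^(-2p)`
(`card_A2ps_eq_coeff`, `prod_sum_X_pow`), and expanding the two factors by the binomial series
gives the formula (`coeff_X_pow_mul_geom_pow`).
-/

open Finset

/-- `A_{2p,s}` : the set of tuples `(i_1, …, i_{2p}) ∈ {1,…,n}^{2p}` with
`Σ_{k=1}^{2p} (-1)^k i_k = s n` (indices `k` are `1`-based, realized here by `0`-based
`k : Fin (2p)` carrying sign `(-1)^{k+1}`). -/
def A2ps (n p : ℕ) (s : ℤ) : Finset (Fin (2 * p) → ℕ) :=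
  (Fintype.piFinset fun _ : Fin (2 * p) => Finset.Icc 1 n).filter
    (fun i => ∑ k : Fin (2 * p), (-1 : ℤ) ^ ((k : ℕ) + 1) * (i k : ℤ) = s * n)

/-- The exponent contributed by the value `i` at the `0`-based position `k`: `i` itself where the
sign is `+` (`k` odd), the reflected value `n - i` where the sign is `-` (`k` even). -/
def signedExp (n k i : ℕ) : ℕ := if Even k then n - i else i

lemma prod_fin_two_mul_alternating {M : Type*} [CommMonoid M] (a b : M) (p : ℕ) :
    ∏ k : Fin (2 * p), (if Even (k : ℕ) then a else b) = (a * b) ^ p := by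
  rw [Fin.prod_univ_eq_prod_range (fun k => if Even k then a else b)]
  induction p with
  | zero => simp
  | succ p ih =>
    rw [show 2 * (p + 1) = 2 * p + 1 + 1 by ring, prod_range_succ, prod_range_succ, ih, pow_succ,
      if_pos (even_two_mul p), if_neg (by simp), mul_assoc]

lemma sum_fin_two_mul_alternating (c : ℤ) (p : ℕ) :
    ∑ k : Fin (2 * p), (if Even (k : ℕ) then c else 0) = p * c := by
  rw [Fin.sum_univ_eq_sum_range (fun k => if Even k then c else 0)]
  induction p with
  | zero => simp
  | succ p ih =>
    rw [show 2 * (p + 1) = 2 * p + 1 + 1 by ring, sum_range_succ, sum_range_succ, ih,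
      if_pos (even_two_mul p), if_neg (by simp)]
    push_cast
    ring

lemma sum_signedExp (n p : ℕ) (i : Fin (2 * p) → ℕ) (hi : ∀ k, i k ≤ n) :
    ((∑ k : Fin (2 * p), signedExp n k (i k) : ℕ) : ℤ) =
      ∑ k : Fin (2 * p), (-1 : ℤ) ^ ((k : ℕ) + 1) * (i k : ℤ) + p * n := by
  rw [← sum_fin_two_mul_alternating (n : ℤ) p, ← sum_add_distrib, Nat.cast_sum]
  refine sum_congr rfl fun k _ => ?_
  unfold signedExp
  by_cases h : Even (k : ℕ)
  · rw [if_pos h, if_pos h, h.add_one.neg_one_pow, Nat.cast_sub (hi k)]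
    ring
  · rw [if_neg h, if_neg h, (Nat.not_even_iff_odd.mp h).add_one.neg_one_pow]
    ring

lemma card_A2ps_eq_coeff (n p : ℕ) (s : ℤ) (N : ℕ) (hN : (N : ℤ) = p + s) :
    ((A2ps n p s).card : ℤ) =
      PowerSeries.coeff (N * n) (∏ k : Fin (2 * p), ∑ i ∈ Icc 1 n,
        (PowerSeries.X : PowerSeries ℤ) ^ signedExp n k i) := by
  rw [prod_univ_sum, map_sum, A2ps, card_filter, Nat.cast_sum]
  refine sum_congr rfl fun i hi => ?_
  have hle : ∀ k, i k ≤ n := fun k => (mem_Icc.mp (Fintype.mem_piFinset.mp hi k)).2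
  have key := sum_signedExp n p i hle
  rw [prod_pow_eq_pow_sum, PowerSeries.coeff_X_pow]
  have hiff : (∑ k : Fin (2 * p), (-1 : ℤ) ^ ((k : ℕ) + 1) * (i k : ℤ) = s * n) ↔
      N * n = ∑ k : Fin (2 * p), signedExp n k (i k) := by
    rw [← Nat.cast_inj (R := ℤ), key, Nat.cast_mul, hN]
    constructor <;> intro h <;> linarith
  simp only [hiff]
  split_ifs <;> simp

lemma prod_sum_X_pow (n p : ℕ) :
    ∏ k : Fin (2 * p), ∑ i ∈ Icc 1 n, (PowerSeries.X : PowerSeries ℤ) ^ signedExp n k i =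
      PowerSeries.X ^ p * (∑ i ∈ range n, PowerSeries.X ^ i) ^ (2 * p) := by
  have h : ∀ k : Fin (2 * p),
      ∑ i ∈ Icc 1 n, (PowerSeries.X : PowerSeries ℤ) ^ signedExp n k i =
        if Even (k : ℕ) then ∑ i ∈ range n, PowerSeries.X ^ i
        else PowerSeries.X * ∑ i ∈ range n, PowerSeries.X ^ i := by
    intro k
    rw [range_eq_Ico, ← Ico_add_one_right_eq_Icc, sum_Ico_eq_sum_range, ← range_eq_Ico]
    unfold signedExp
    split_ifs
    · rw [← sum_range_reflect]
      refine sum_congr (by simp) fun i hi => ?_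
      have hi' := mem_range.mp hi
      congr 1
      omega
    · rw [mul_sum]
      refine sum_congr (by simp) fun i _ => ?_
      rw [add_comm, pow_succ']
  simp only [h]
  rw [prod_fin_two_mul_alternating]
  ring

lemma geom_sum_eq_mul_mk_one (n : ℕ) :
    ∑ i ∈ range n, (PowerSeries.X : PowerSeries ℤ) ^ i =
      (1 - PowerSeries.X ^ n) * PowerSeries.mk 1 := by
  rw [← mul_neg_geom_sum, mul_right_comm, mul_comm (1 - PowerSeries.X),
    PowerSeries.mk_one_mul_one_sub_eq_one, one_mul]

/-- Expansion of `X^p (1 - X^n)^(2p) (1 - X)^(-2p)`. -/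
lemma coeff_X_pow_mul_geom_pow (n p M : ℕ) (hp : 1 ≤ p) :
    PowerSeries.coeff M
      (PowerSeries.X ^ p * (∑ i ∈ range n, (PowerSeries.X : PowerSeries ℤ) ^ i) ^ (2 * p)) =
    ∑ k ∈ range (2 * p + 1), (-1 : ℤ) ^ k * ((2 * p).choose k : ℤ) *
      (if p + n * k ≤ M then (Nat.choose (2 * p - 1 + (M - (p + n * k))) (2 * p - 1) : ℤ)
        else 0) := by
  have hmk : (PowerSeries.mk 1 : PowerSeries ℤ) ^ (2 * p) =
      PowerSeries.mk fun d => ((2 * p - 1 + d).choose (2 * p - 1) : ℤ) := by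
    rw [← PowerSeries.mk_one_pow_eq_mk_choose_add, Nat.sub_add_cancel (by omega)]
  rw [geom_sum_eq_mul_mk_one, mul_pow, hmk, sub_eq_neg_add, add_pow, sum_mul, mul_sum, map_sum]
  refine sum_congr rfl fun k _ => ?_
  have hterm : ∀ F : PowerSeries ℤ,
      PowerSeries.X ^ p * ((-PowerSeries.X ^ n) ^ k * 1 ^ (2 * p - k) *
        (((2 * p).choose k : ℕ) : PowerSeries ℤ) * F) =
      PowerSeries.C ((-1 : ℤ) ^ k * ((2 * p).choose k : ℤ)) *
        (PowerSeries.X ^ (p + n * k) * F) := by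
    intro F
    rw [neg_pow, one_pow, ← pow_mul, pow_add]
    simp only [map_mul, map_pow, map_neg, map_one, map_natCast]
    ring
  rw [hterm, PowerSeries.coeff_C_mul, PowerSeries.coeff_X_pow_mul']
  simp only [PowerSeries.coeff_mk]

/-- **Cardinality of `A_{2p,s}`.** For `n, p ≥ 1` and `-(p-1) ≤ s ≤ p-1`,
`|A_{2p,s}| = Σ_{k=0}^{p+s-1} (-1)^k C(2p,k) C((p+s-k)n + p - 1, 2p-1)`. -/
theorem card_A2ps (n p : ℕ) (hn : 1 ≤ n) (hp : 1 ≤ p) (s : ℤ)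
    (hs₁ : -(p : ℤ) + 1 ≤ s) (hs₂ : s ≤ (p : ℤ) - 1) :
    ((A2ps n p s).card : ℤ) =
      ∑ k ∈ Finset.range (((p : ℤ) + s).toNat),
        (-1 : ℤ) ^ k * ((2 * p).choose k : ℤ) *
          (Nat.choose ((((p : ℤ) + s).toNat - k) * n + p - 1) (2 * p - 1) : ℤ) := by
  obtain ⟨N, hN⟩ : ∃ N : ℕ, (N : ℤ) = p + s := ⟨((p : ℤ) + s).toNat, by omega⟩
  rw [card_A2ps_eq_coeff n p s N hN, prod_sum_X_pow, coeff_X_pow_mul_geom_pow n p _ hp, ← hN,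
    Int.toNat_natCast]
  have hsub : range N ⊆ range (2 * p + 1) := range_subset_range.mpr (by omega)
  symm
  rw [← sum_subset hsub]
  · refine sum_congr rfl fun k hk => ?_
    obtain ⟨d, rfl⟩ := Nat.exists_eq_add_of_le (mem_range.mp hk).le
    have hmul : (k + d) * n = n * k + d * n := by ring
    rw [Nat.add_sub_cancel_left, hmul]
    split_ifs with h
    · congr 3
      omega
    -- Here `d * n < p`, so the upper index of the binomial is below `2p - 1`.
    · rw [Nat.choose_eq_zero_of_lt (n := d * n + p - 1) (by omega), Nat.cast_zero]
  · intro k _ hk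
    have hk' : N * n ≤ n * k := by
      rw [mul_comm n k]
      exact Nat.mul_le_mul_right n (by simpa using hk)
    rw [if_neg (by omega), mul_zero]
end

section
/- Let n ≥ 1 and let y_1, …, y_n be real numbers. Let M be the n×n reverse circulant matrix whose (i,j)-th entry is y_{(i+j−1) mod n}, with the index taken as a representative in {1,…,n}. Then for every integer p ≥ 1, Tr(M^{2p}) = n · Σ_{(i_1,…,i_{2p}) ∈ A_{2p}} y_{i_1} y_{i_2} ⋯ y_{i_{2p}}. -/
/-!
Expanding `(M ^ m) a b` gives a sum over walks `a = j₀, j₁, …, j_m = b` of `∏ y (j_{k-1} + j_k)`.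
Recording a walk by the successive sums `x_k = j_{k-1} + j_k` in `ℤ/n`, the start `a` and the sums
determine the walk, and its end is `b` exactly when `a + Σ (-1)^k x_k = (-1)^m b`
(`hankel_pow_apply`). For `m = 2p` and `a = b` this condition is `Σ (-1)^k x_k = 0`, independent of
`a`, whence the factor `n`. Passing from `x_k` to `i_k = x_k + 1` does not change the alternating
sum, because it has an even number of terms.
-/

open Finset

/-- The reverse circulant matrix built from the entries `y 1, …, y n`:
its `(i,j)`-th entry (with `1`-based indices) is `y ((i+j-1) mod n)`, the
representative of the index being taken in `{1, …, n}`. -/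
noncomputable def RCmat (n : ℕ) (y : ℕ → ℝ) : Matrix (Fin n) (Fin n) ℝ :=
  Matrix.of fun i j => y ((((i : ℕ) + (j : ℕ)) % n) + 1)

/-- `A_{2p}` : the set of tuples `(i_1, …, i_{2p}) ∈ {1,…,n}^{2p}` with
`Σ_{k=1}^{2p} (-1)^k i_k ≡ 0 (mod n)`. -/
def A2p (n p : ℕ) : Finset (Fin (2 * p) → ℕ) :=
  (Fintype.piFinset fun _ : Fin (2 * p) => Finset.Icc 1 n).filter
    (fun i => (∑ k : Fin (2 * p), (-1 : ℤ) ^ ((k : ℕ) + 1) * (i k : ℤ)) % n = 0)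

/-- Entries of powers of a matrix `(a, b) ↦ f (e a + e b)` whose indices are identified with
elements of a ring `R` by `e`: `x k` is the sum of the `k`-th and `(k+1)`-st vertices of a walk from
`a` to `b`, and the condition says that the walk ends at `b`. -/
lemma hankel_pow_apply {ι R : Type*} [Fintype ι] [DecidableEq ι] [CommRing R] [Fintype R]
    [DecidableEq R] (e : ι ≃ R) (f : R → ℝ) (m : ℕ) (a b : ι) :
    ((Matrix.of fun i j : ι => f (e i + e j)) ^ m) a b =
      ∑ x : Fin m → R,
        if e a + ∑ k : Fin m, (-1) ^ ((k : ℕ) + 1) * x k = (-1) ^ m * e b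
          then ∏ k, f (x k) else 0 := by
  induction m generalizing a with
  | zero => simp [Matrix.one_apply]
  | succ m ih =>
    rw [pow_succ', Matrix.mul_apply, ← (Fin.consEquiv fun _ => R).sum_comp, Fintype.sum_prod_type,
      ← (e.trans (Equiv.addLeft (e a))).sum_comp]
    refine Finset.sum_congr rfl fun c _ => ?_
    rw [ih, Finset.mul_sum]
    refine Finset.sum_congr rfl fun x _ => ?_
    -- With first sum `e a + e c`, the condition for `(a, m + 1)` is the negative of that for
    -- `(c, m)`.
    have key : e a + ∑ k : Fin (m + 1),
          (-1) ^ ((k : ℕ) + 1) * (Fin.cons (e a + e c) x : Fin (m + 1) → R) k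
        = -(e c + ∑ k : Fin m, (-1) ^ ((k : ℕ) + 1) * x k) := by
      rw [Fin.sum_univ_succ]
      simp only [Fin.cons_zero, Fin.cons_succ, Fin.val_zero, Fin.val_succ, pow_succ _ (_ + 1)]
      simp only [mul_neg_one, neg_mul, Finset.sum_neg_distrib]
      ring
    simp only [Fin.consEquiv_apply, Equiv.trans_apply, Equiv.coe_addLeft, key, pow_succ' _ m,
      neg_mul, one_mul, neg_inj, Fin.prod_univ_succ, Fin.cons_zero, Fin.cons_succ, mul_ite,
      mul_zero, Matrix.of_apply]

lemma sum_neg_one_pow_fin_even {R : Type*} [CommRing R] (p : ℕ) :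
    ∑ k : Fin (2 * p), (-1 : R) ^ ((k : ℕ) + 1) = 0 := by
  rw [Fin.sum_univ_eq_sum_range (fun k => (-1 : R) ^ (k + 1))]
  induction p with
  | zero => simp
  | succ p ih => rw [mul_add, mul_one, Finset.sum_range_succ, Finset.sum_range_succ, ih]; ring

/-- The sum over `A_{2p}`, reindexed by residues through `i_k = x_k + 1`. -/
lemma sum_A2p (n : ℕ) [NeZero n] (y : ℕ → ℝ) (p : ℕ) :
    ∑ i ∈ A2p n p, ∏ k, y (i k) =
      ∑ x : Fin (2 * p) → ZMod n,
        if ∑ k : Fin (2 * p), (-1) ^ ((k : ℕ) + 1) * x k = 0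
          then ∏ k, y ((x k).val + 1) else 0 := by
  have hshift (x : Fin (2 * p) → ZMod n) :
      ∑ k : Fin (2 * p), (-1) ^ ((k : ℕ) + 1) * (x k + 1) =
        ∑ k : Fin (2 * p), (-1) ^ ((k : ℕ) + 1) * x k := by
    simp only [mul_add, mul_one, Finset.sum_add_distrib, sum_neg_one_pow_fin_even, add_zero]
  have hcond (i : Fin (2 * p) → ℕ) :
      (∑ k : Fin (2 * p), (-1 : ℤ) ^ ((k : ℕ) + 1) * (i k : ℤ)) % n = 0 ↔
        ∑ k : Fin (2 * p), (-1 : ZMod n) ^ ((k : ℕ) + 1) * (i k : ZMod n) = 0 := by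
    rw [← Int.dvd_iff_emod_eq_zero, ← ZMod.intCast_zmod_eq_zero_iff_dvd]
    push_cast
    rfl
  have hval (j : ℕ) (hj : j ∈ Finset.Icc 1 n) : ((j : ZMod n) - 1).val + 1 = j := by
    obtain ⟨h1, h2⟩ := Finset.mem_Icc.1 hj
    obtain ⟨j, rfl⟩ := Nat.exists_eq_add_of_le' h1
    rw [Nat.cast_add, Nat.cast_one, add_sub_cancel_right, ZMod.val_cast_of_lt (by omega)]
  rw [← Finset.sum_filter]
  refine Finset.sum_bij' (fun i _ k => (i k : ZMod n) - 1) (fun x _ k => (x k).val + 1)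
    ?_ ?_ ?_ ?_ ?_
  · intro i hi
    rw [A2p, Finset.mem_filter, hcond] at hi
    rw [Finset.mem_filter, ← hshift]
    simpa using hi.2
  · intro x hx
    rw [Finset.mem_filter, ← hshift] at hx
    rw [A2p, Finset.mem_filter, hcond]
    refine ⟨Fintype.mem_piFinset.2 fun k => Finset.mem_Icc.2 ⟨by omega, ZMod.val_lt _⟩, ?_⟩
    simpa using hx.2
  · intro i hi
    have hi := Fintype.mem_piFinset.1 (Finset.mem_filter.1 hi).1
    exact funext fun k => hval _ (hi k)
  · intro x _
    simp
  · intro i hi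
    have hi := Fintype.mem_piFinset.1 (Finset.mem_filter.1 hi).1
    exact Finset.prod_congr rfl fun k _ => by rw [hval _ (hi k)]

/-- **Trace formula for reverse circulant matrices.**
`Tr(M^{2p}) = n Σ_{(i_1,…,i_{2p}) ∈ A_{2p}} y_{i_1} y_{i_2} ⋯ y_{i_{2p}}`. -/
theorem trace_formula (n : ℕ) (hn : 1 ≤ n) (y : ℕ → ℝ) (p : ℕ) (hp : 1 ≤ p) :
    Matrix.trace ((RCmat n y) ^ (2 * p)) =
      (n : ℝ) * ∑ i ∈ A2p n p, ∏ k : Fin (2 * p), y (i k) := by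
  have : NeZero n := ⟨by omega⟩
  let e : Fin n ≃ ZMod n :=
    { toFun := fun i => ((i : ℕ) : ZMod n)
      invFun := fun z => ⟨z.val, ZMod.val_lt z⟩
      left_inv := fun i => Fin.ext (ZMod.val_cast_of_lt i.isLt)
      right_inv := fun z => ZMod.natCast_zmod_val z }
  have hM : RCmat n y = Matrix.of fun i j => y ((e i + e j).val + 1) := by
    ext i j
    simp only [RCmat, Matrix.of_apply, e, Equiv.coe_fn_mk, ← Nat.cast_add, ZMod.val_natCast]
  have hdiag (a : Fin n) :
      (RCmat n y ^ (2 * p)) a a = ∑ i ∈ A2p n p, ∏ k, y (i k) := by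
    rw [sum_A2p, hM, hankel_pow_apply e (fun z => y (z.val + 1)),
      (even_two_mul p).neg_one_pow]
    simp only [one_mul, add_eq_left]
  simp only [Matrix.trace, Matrix.diag_apply, hdiag, Finset.sum_const, Finset.card_univ,
    Fintype.card_fin, nsmul_eq_mul]
end

section
/- Let n ≥ 1, let y_1, …, y_n be real numbers, let M be the n×n reverse circulant matrix whose (i,j)-th entry is y_{(i+j−1) mod n} (index taken as a representative in {1,…,n}), and let e_1,…,e_n be the standard basis vectors of ℝ^n, with the convention e_0 = e_n and indices of basis vectors read mod n. Then for every p ≥ 1 and every i ∈ {1,…,n}: M^{2p} e_i = Σ_{i_1,…,i_{2p}=1}^{n} y_{i_1}⋯y_{i_{2p}} e_{(i_{2p} − i_{2p−1} + ⋯ − i_1 + i) mod n}, and M^{2p+1} e_i = Σ_{i_1,…,i_{2p+1}=1}^{n} y_{i_1}⋯y_{i_{2p+1}} e_{(i_{2p+1} − i_{2p} + ⋯ + i_1 − i + 1) mod n}. -/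
/-!
A reverse circulant matrix acts on the standard basis by `M e_m = Σ_k y_k e_{k - m + 1}`
(`RCmat_mulVec_stdv`), since row `a` of column `m` holds `y_k` exactly when `k ≡ a + m - 1`.
One more application of `M` to a sum of vectors `e_{f v}` over index tuples `v` thus appends a new
last index `k` to the tuple and replaces `f v` by `k - f v + 1` (`RCmat_pow_succ`). Applied twice,
the corrections `+ 1` cancel and all earlier signs are restored, so both formulas follow by
induction on `p`, starting from the trivial case `p = 0`.
-/

open Finset

/-- The index in `Fin n` (0-based) corresponding to the representative of the integer
`m` modulo `n` taken in `{1, …, n}` (so `m = 0` corresponds to `n`, i.e. `e_0 = e_n`). -/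
def modIdx (n : ℕ) (hn : 0 < n) (m : ℤ) : Fin n :=
  ⟨((m - 1) % (n : ℤ)).toNat, by
    have h1 : (0 : ℤ) < (n : ℤ) := by exact_mod_cast hn
    have h2 : (m - 1) % (n : ℤ) < (n : ℤ) := Int.emod_lt_of_pos _ h1
    have h3 : (0 : ℤ) ≤ (m - 1) % (n : ℤ) := Int.emod_nonneg _ (by positivity)
    omega⟩

/-- The standard basis vector `e_{m mod n}` of `ℝ^n`, where the index of a basis
vector is read modulo `n` with representative in `{1, …, n}` (so `e_0 = e_n`). -/
noncomputable def stdv (n : ℕ) (hn : 0 < n) (m : ℤ) : Fin n → ℝ :=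
  Pi.single (modIdx n hn m) 1

/-- The condition `a = m mod n`, with `a` zero-based, as a congruence of integers. -/
lemma eq_modIdx_iff (n : ℕ) (hn : 0 < n) (m : ℤ) (a : Fin n) :
    a = modIdx n hn m ↔ ((a : ℕ) : ℤ) ≡ m - 1 [ZMOD n] := by
  have hpos : (0 : ℤ) < n := by exact_mod_cast hn
  have hnonneg : (0 : ℤ) ≤ (m - 1) % (n : ℤ) := Int.emod_nonneg _ hpos.ne'
  have ha : ((a : ℕ) : ℤ) % n = (a : ℕ) :=
    Int.emod_eq_of_lt (by positivity) (by exact_mod_cast a.isLt)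
  rw [Fin.ext_iff, Int.ModEq, ha]
  simp only [modIdx]
  omega

lemma RCmat_mulVec_stdv (n : ℕ) (hn : 0 < n) (y : ℕ → ℝ) (m : ℤ) :
    Matrix.mulVec (RCmat n y) (stdv n hn m) =
      ∑ k ∈ Finset.Icc 1 n, y k • stdv n hn ((k : ℤ) - m + 1) := by
  ext a
  have hidx : (((modIdx n hn m : Fin n) : ℕ) : ℤ) ≡ m - 1 [ZMOD n] :=
    (eq_modIdx_iff n hn m _).1 rfl
  set b := modIdx n hn m with hb
  have hlt : ((a : ℕ) + (b : ℕ)) % n < n := Nat.mod_lt _ hn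
  have hmod : ((((a : ℕ) + (b : ℕ)) % n : ℕ) : ℤ) ≡ (a : ℕ) + (m - 1) [ZMOD n] := by
    push_cast
    exact (Int.mod_modEq _ _).trans (hidx.add_left _)
  simp only [stdv, ← hb, Matrix.mulVec_single_one, Matrix.col_apply, RCmat, Matrix.of_apply,
    Finset.sum_apply, Pi.smul_apply, Pi.single_apply, smul_eq_mul, mul_ite, mul_one, mul_zero]
  -- The only surviving index is the representative of `a + m - 1` (one-based) in `{1, …, n}`.
  rw [Finset.sum_eq_single (((a : ℕ) + (b : ℕ)) % n + 1)]
  · rw [if_pos]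
    rw [eq_modIdx_iff]
    have h := (hmod.sub_right (m - 1)).symm
    push_cast at h ⊢
    convert h using 1 <;> ring
  · intro k hk hne
    rw [if_neg]
    intro h
    rw [eq_modIdx_iff] at h
    rw [Finset.mem_Icc] at hk
    apply hne
    have h1 : ((((a : ℕ) + (b : ℕ)) % n : ℕ) : ℤ) ≡ ((k - 1 : ℕ) : ℤ) [ZMOD n] := by
      refine hmod.trans ?_
      have h2 := h.add_right (m - 1)
      push_cast [hk.1]
      convert h2 using 1
      ring
    have h3 := (Int.natCast_modEq_iff.1 h1).eq_of_lt_of_lt hlt (by omega)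
    omega
  · intro h
    exact absurd (Finset.mem_Icc.2 ⟨by omega, by omega⟩) h

/-- Passing from `M ^ r` to `M ^ (r + 1)` appends one summation index and reflects the index of
the basis vector. -/
lemma RCmat_pow_succ (n : ℕ) (hn : 0 < n) (y : ℕ → ℝ) (r : ℕ) (m : ℤ)
    (f : (Fin r → ℕ) → ℤ)
    (h : Matrix.mulVec ((RCmat n y) ^ r) (stdv n hn m) =
      ∑ v ∈ Fintype.piFinset (fun _ : Fin r => Finset.Icc 1 n),
        (∏ k : Fin r, y (v k)) • stdv n hn (f v)) :
    Matrix.mulVec ((RCmat n y) ^ (r + 1)) (stdv n hn m) =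
      ∑ v ∈ Fintype.piFinset (fun _ : Fin (r + 1) => Finset.Icc 1 n),
        (∏ k : Fin (r + 1), y (v k)) •
          stdv n hn ((v (Fin.last r) : ℤ) - f (fun k => v k.castSucc) + 1) := by
  rw [pow_succ', ← Matrix.mulVec_mulVec, h, Matrix.mulVec_sum]
  simp only [Matrix.mulVec_smul, RCmat_mulVec_stdv, Finset.smul_sum, smul_smul]
  rw [← Finset.sum_product']
  refine Finset.sum_bij' (fun x _ => (Fin.snoc x.1 x.2 : Fin (r + 1) → ℕ))
    (fun v _ => (fun k => v k.castSucc, v (Fin.last r))) ?_ ?_ ?_ ?_ ?_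
  · rintro ⟨v, k⟩ hx
    simp only [Finset.mem_product, Fintype.mem_piFinset] at hx ⊢
    intro j
    refine Fin.lastCases ?_ (fun j => ?_) j
    · simpa using hx.2
    · simpa using hx.1 j
  · intro v hv
    simp only [Finset.mem_product, Fintype.mem_piFinset] at hv ⊢
    exact ⟨fun j => hv _, hv _⟩
  · rintro ⟨v, k⟩ _
    simp
  · intro v _
    exact Fin.snoc_init_self v
  · rintro ⟨v, k⟩ _
    simp [Fin.prod_univ_castSucc]

lemma RCmat_pow_odd_of_even (n : ℕ) (hn : 0 < n) (y : ℕ → ℝ) (p : ℕ) (m : ℤ)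
    (h : Matrix.mulVec ((RCmat n y) ^ (2 * p)) (stdv n hn m) =
      ∑ v ∈ Fintype.piFinset (fun _ : Fin (2 * p) => Finset.Icc 1 n),
        (∏ k : Fin (2 * p), y (v k)) •
          stdv n hn ((∑ k : Fin (2 * p), (-1 : ℤ) ^ ((k : ℕ) + 1) * (v k : ℤ)) + m)) :
    Matrix.mulVec ((RCmat n y) ^ (2 * p + 1)) (stdv n hn m) =
      ∑ v ∈ Fintype.piFinset (fun _ : Fin (2 * p + 1) => Finset.Icc 1 n),
        (∏ k : Fin (2 * p + 1), y (v k)) •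
          stdv n hn ((∑ k : Fin (2 * p + 1), (-1 : ℤ) ^ ((k : ℕ)) * (v k : ℤ)) - m + 1) := by
  rw [RCmat_pow_succ n hn y (2 * p) m _ h]
  refine Finset.sum_congr rfl fun v _ => ?_
  congr 2
  rw [Fin.sum_univ_castSucc]
  simp only [pow_succ, Fin.val_castSucc, Fin.val_last, pow_mul, mul_neg,
    mul_one, neg_mul, Finset.sum_neg_distrib]
  ring

lemma RCmat_pow_even (n : ℕ) (hn : 0 < n) (y : ℕ → ℝ) (p : ℕ) (m : ℤ) :
    Matrix.mulVec ((RCmat n y) ^ (2 * p)) (stdv n hn m) =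
      ∑ v ∈ Fintype.piFinset (fun _ : Fin (2 * p) => Finset.Icc 1 n),
        (∏ k : Fin (2 * p), y (v k)) •
          stdv n hn ((∑ k : Fin (2 * p), (-1 : ℤ) ^ ((k : ℕ) + 1) * (v k : ℤ)) + m) := by
  induction p with
  | zero => simp
  | succ p ih =>
    change Matrix.mulVec ((RCmat n y) ^ (2 * p + 1 + 1)) (stdv n hn m) =
      ∑ v ∈ Fintype.piFinset (fun _ : Fin (2 * p + 1 + 1) => Finset.Icc 1 n),
        (∏ k : Fin (2 * p + 1 + 1), y (v k)) •
          stdv n hn ((∑ k : Fin (2 * p + 1 + 1), (-1 : ℤ) ^ ((k : ℕ) + 1) * (v k : ℤ)) + m)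
    rw [RCmat_pow_succ n hn y (2 * p + 1) m _ (RCmat_pow_odd_of_even n hn y p m ih)]
    refine Finset.sum_congr rfl fun v _ => ?_
    congr 2
    rw [Fin.sum_univ_castSucc (n := 2 * p + 1)]
    simp only [pow_succ, Fin.val_castSucc, Fin.val_last, pow_mul, mul_neg,
      mul_one, neg_mul, neg_neg, Finset.sum_neg_distrib]
    ring

/-- **Action of powers of a reverse circulant matrix on the standard basis.**
For every `p ≥ 1` and `i ∈ {1,…,n}`:
`M^{2p} e_i = Σ_{i_1,…,i_{2p}=1}^{n} y_{i_1}⋯y_{i_{2p}} e_{(i_{2p} - i_{2p-1} + ⋯ - i_1 + i) mod n}`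
and
`M^{2p+1} e_i = Σ_{i_1,…,i_{2p+1}=1}^{n} y_{i_1}⋯y_{i_{2p+1}} e_{(i_{2p+1} - i_{2p} + ⋯ + i_1 - i + 1) mod n}`. -/
theorem power_mulVec_basis (n : ℕ) (hn : 0 < n) (y : ℕ → ℝ) (p : ℕ) (hp : 1 ≤ p)
    (i : ℕ) (hi : i ∈ Finset.Icc 1 n) :
    (Matrix.mulVec ((RCmat n y) ^ (2 * p)) (stdv n hn (i : ℤ)) =
      ∑ v ∈ Fintype.piFinset (fun _ : Fin (2 * p) => Finset.Icc 1 n),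
        (∏ k : Fin (2 * p), y (v k)) •
          stdv n hn ((∑ k : Fin (2 * p), (-1 : ℤ) ^ ((k : ℕ) + 1) * (v k : ℤ)) + i)) ∧
    (Matrix.mulVec ((RCmat n y) ^ (2 * p + 1)) (stdv n hn (i : ℤ)) =
      ∑ v ∈ Fintype.piFinset (fun _ : Fin (2 * p + 1) => Finset.Icc 1 n),
        (∏ k : Fin (2 * p + 1), y (v k)) •
          stdv n hn ((∑ k : Fin (2 * p + 1), (-1 : ℤ) ^ ((k : ℕ)) * (v k : ℤ)) - i + 1)) := by
  have h := RCmat_pow_even n hn y p (i : ℤ)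
  exact ⟨h, RCmat_pow_odd_of_even n hn y p (i : ℤ) h⟩
end

section
/- Let ℓ ≥ 3 and p_1, …, p_ℓ ≥ 1 be integers, and P_ℓ = (2p_1,…,2p_ℓ). Then, as n → ∞, |B_{P_ℓ}| = o( n^{p_1 + p_2 + ⋯ + p_ℓ − ℓ/2} ). -/
/-!
The tuples are sorted by their pattern, the partition `s` of the set of positions `(i, k)` in which
two positions are equivalent when they carry the same entry. There are finitely many patterns, so
each can be treated separately. Tuples with pattern `s` are determined by the values `x_B` of the
blocks modulo `n`, and the congruences say that `x` solves a homogeneous system of `ℓ` equations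
with integer coefficients. If `T` is a set of columns of this system that is independent modulo `2`,
then there are `O(n ^ (b - |T|))` solutions, with `b` the number of blocks (`card_sol`): a suitable
integer combination of the equations isolates each `D * x_B`, `B ∈ T`, for a fixed `D ≠ 0`.

Modulo `2` the signs disappear and the coefficient of `x_B` in row `i` is the number of positions of
row `i` in `B`. It remains to show `b - |T| < ∑ p_i - ℓ / 2` for some such `T`, that is,
`ℓ < 2 |T| + ∑_B (|B| - 2)`. This is `exists_indep_columns`: for a basis `T` of the column space a
charging argument gives the weak inequality, and equality is incompatible with the rows having even
length and being connected through common blocks once `ℓ ≥ 3`.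
-/

open Finset Filter Asymptotics
open scoped Topology

/-- The multiset `S_J` of entries of a tuple `J`. -/
def entriesM {m : ℕ} (J : Fin m → ℕ) : Multiset ℕ :=
  Multiset.map J Finset.univ.val

/-- A tuple `(J_1, …, J_ℓ)` forms a *cluster* if the graph on `{1,…,ℓ}` with an edge
between `i ≠ j` whenever `S_{J_i} ∩ S_{J_j} ≠ ∅` is connected. -/
def IsCluster {l : ℕ} {m : Fin l → ℕ} (J : ∀ i : Fin l, Fin (m i) → ℕ) : Prop :=
  (SimpleGraph.fromRel fun i j : Fin l => ∃ a b, J i a = J j b).Connected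

/-- The condition `J ∈ A_{2p}` : entries in `{1,…,n}` and
`Σ_{k=1}^{2p} (-1)^k i_k ≡ 0 (mod n)`. -/
def memA2p (n p : ℕ) (J : Fin (2 * p) → ℕ) : Prop :=
  (∀ k, J k ∈ Finset.Icc 1 n) ∧
    (∑ k : Fin (2 * p), (-1 : ℤ) ^ ((k : ℕ) + 1) * (J k : ℤ)) % n = 0

open scoped Classical in
/-- `B_{P_ℓ}` : the set of tuples `(J_1, …, J_ℓ) ∈ A_{2p_1} × ⋯ × A_{2p_ℓ}` forming a
cluster and such that every element of the combined multiset `S_{J_1} ∪ ⋯ ∪ S_{J_ℓ}`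
has total multiplicity at least two. -/
noncomputable def BP (n : ℕ) {l : ℕ} (p : Fin l → ℕ) :
    Finset (∀ i : Fin l, Fin (2 * p i) → ℕ) :=
  (Fintype.piFinset fun i => Fintype.piFinset fun _ => Finset.Icc 1 n).filter
    (fun J => (∀ i, memA2p n (p i) (J i)) ∧ IsCluster J ∧
      ∀ v ∈ ∑ i : Fin l, entriesM (J i), 2 ≤ (∑ i : Fin l, entriesM (J i)).count v)

/-! ### Counting solutions of linear systems modulo `n` -/

/-- An integer matrix whose columns are independent modulo `2` has an integral left inverse up to
a nonzero scalar: lift a left inverse `L` modulo `2`; then `L * A` has odd determinant, and the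
adjugate of `L * A` finishes. -/
theorem exists_left_inverse_smul (ι τ : Type*) [Fintype ι] [Fintype τ] [DecidableEq ι] [DecidableEq τ] (A : Matrix ι τ ℤ)
    (h : LinearIndependent (ZMod 2) (fun (B : τ) (i : ι) => (A i B : ZMod 2))) :
    ∃ (D : ℤ) (L : Matrix τ ι ℤ), D ≠ 0 ∧ L * A = D • (1 : Matrix τ τ ℤ) := by
  set A2 : Matrix ι τ (ZMod 2) := A.map (Int.castRingHom (ZMod 2)) with hA2
  have hinj : Function.Injective A2.mulVec := by
    rw [Matrix.mulVec_injective_iff]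
    exact h
  obtain ⟨g, hg⟩ := LinearMap.exists_leftInverse_of_injective A2.mulVecLin
    (LinearMap.ker_eq_bot.2 hinj)
  have hL2 : LinearMap.toMatrix' g * A2 = 1 := by
    have := congrArg LinearMap.toMatrix' hg
    rw [LinearMap.toMatrix'_comp, LinearMap.toMatrix'_id, ← Matrix.toLin'_apply',
      LinearMap.toMatrix'_toLin'] at this
    exact this
  choose L0 hL0 using fun (B : τ) (i : ι) =>
    ZMod.intCast_surjective (n := 2) (LinearMap.toMatrix' g B i)
  have hmap : (Matrix.of L0).map (Int.castRingHom (ZMod 2)) = LinearMap.toMatrix' g := by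
    ext B i; simp [hL0]
  have hprod : (Matrix.of L0 * A).map (Int.castRingHom (ZMod 2)) = 1 := by
    rw [Matrix.map_mul, hmap, ← hA2, hL2]
  refine ⟨(Matrix.of L0 * A).det, (Matrix.of L0 * A).adjugate * Matrix.of L0, ?_, ?_⟩
  · intro h0
    have h1 := (Int.castRingHom (ZMod 2)).map_det (Matrix.of L0 * A)
    rw [h0, RingHom.mapMatrix_apply, hprod] at h1
    simp at h1
  · rw [Matrix.mul_assoc, Matrix.adjugate_mul]

/-- If the columns in `T` are independent modulo `2`, then the unknowns outside `T` determine those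
in `T` up to a number of choices bounded independently of `n`. -/
theorem card_sol {ι β : Type*} [Fintype ι] [Fintype β] [DecidableEq ι] [DecidableEq β]
    (A : ι → β → ℤ) (T : Finset β)
    (h : LinearIndepOn (ZMod 2) (fun (B : β) (i : ι) => (A i B : ZMod 2)) (T : Set β)) :
    ∃ C : ℕ, ∀ (n : ℕ) [NeZero n],
      #{x : β → ZMod n | ∀ i, ∑ B, (A i B : ZMod n) * x B = 0}
        ≤ C * n ^ (Fintype.card β - #T) := by
  obtain ⟨D, L, hD, hL⟩ := exists_left_inverse_smul ι T (Matrix.of fun i B => A i B.1) h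
  refine ⟨D.natAbs ^ Fintype.card β, fun n _ => ?_⟩
  set s : Finset (β → ZMod n) := {x | ∀ i, ∑ B, (A i B : ZMod n) * x B = 0} with hs
  have hker : ∀ y : β → ZMod n, y ∈ s → (∀ B ∉ T, y B = 0) → ∀ B, D.natAbs • y B = 0 := by
    intro y hy hyT B
    by_cases hB : B ∉ T
    · rw [hyT B hB, smul_zero]
    push Not at hB
    have hy' : ∀ i, ∑ B : T, (A i B : ZMod n) * y B = 0 := by
      intro i
      have := (mem_filter.1 hy).2 i
      rw [← this, ← Finset.sum_subset (Finset.subset_univ T), Finset.sum_coe_sort T (fun B => (A i B : ZMod n) * y B)]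
      intro B _ hB
      rw [hyT B hB, mul_zero]
    have hDy : (D : ZMod n) * y B = 0 := by
      have e : ∀ B' : T, ((∑ i, L ⟨B, hB⟩ i * A i B' : ℤ) : ZMod n)
          = if B' = ⟨B, hB⟩ then (D : ZMod n) else 0 := by
        intro B'
        have := congrFun (congrFun hL ⟨B, hB⟩) B'
        rw [Matrix.mul_apply] at this
        simp only [Matrix.of_apply] at this
        rw [this, Matrix.smul_apply, Matrix.one_apply]
        by_cases hBB : B' = ⟨B, hB⟩
        · simp [hBB]
        · simp [hBB, Ne.symm hBB]
      calc (D : ZMod n) * y B = ∑ B' : T, (if B' = ⟨B, hB⟩ then (D : ZMod n) else 0) * y B' := by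
            simp [ite_mul]
        _ = ∑ B' : T, ((∑ i, L ⟨B, hB⟩ i * A i B' : ℤ) : ZMod n) * y B' := by
            simp only [e]
        _ = ∑ i, (L ⟨B, hB⟩ i : ZMod n) * ∑ B' : T, (A i B' : ZMod n) * y B' := by
            push_cast
            simp only [Finset.sum_mul, Finset.mul_sum, mul_assoc]
            rw [Finset.sum_comm]
        _ = 0 := sum_eq_zero fun i _ => by rw [hy', mul_zero]
    rw [nsmul_eq_mul]
    rcases Int.natAbs_eq D with h1 | h1 <;> rw [h1] at hDy <;> simpa using hDy
  set f : (β → ZMod n) → ((Tᶜ : Finset β) → ZMod n) := fun x B => x B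
  have himg : #(s.image f) ≤ n ^ (Fintype.card β - #T) := by
    refine (Finset.card_le_univ _).trans (le_of_eq ?_)
    rw [Fintype.card_fun, ZMod.card, Fintype.card_coe, Finset.card_compl]
  refine (Finset.card_le_mul_card_image (f := f) s (D.natAbs ^ Fintype.card β) ?_).trans
    (Nat.mul_le_mul_left _ himg)
  intro a ha
  obtain ⟨x₀, hx₀, rfl⟩ := Finset.mem_image.1 ha
  let K : Finset (ZMod n) := {y | D.natAbs • y = 0}
  have hK : #K ≤ D.natAbs := IsAddCyclic.card_nsmul_eq_zero_le (Int.natAbs_pos.2 hD)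
  calc _ ≤ #(Fintype.piFinset fun _ : β => K) := by
        refine Finset.card_le_card_of_injOn (fun x => x - x₀) ?_ ?_
        · intro x hx
          simp only [coe_filter, Set.mem_ofPred_eq] at hx
          have hx1 := (mem_filter.1 hx.1).2
          have hx2 := (mem_filter.1 hx₀).2
          rw [Finset.mem_coe, Fintype.mem_piFinset]
          intro B
          refine mem_filter.2 ⟨mem_univ _, hker _ ?_ ?_ B⟩
          · refine mem_filter.2 ⟨mem_univ _, fun i => ?_⟩
            simp [mul_sub, Finset.sum_sub_distrib, hx1, hx2]
          · intro B hB
            have := congrFun hx.2 ⟨B, by simpa using hB⟩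
            simpa [f, sub_eq_zero] using this
        · intro x _ y _ hxy
          exact sub_left_injective hxy
    _ = #K ^ Fintype.card β := by simp
    _ ≤ _ := Nat.pow_le_pow_left hK _

/-! ### The rank inequality -/

/-- Let `m i B` be the number of positions of row `i` in block `B`. If all blocks have size at least
two, all rows have even length, the rows are connected through common blocks, and there are at
least three rows, then some set `T` of columns is independent modulo `2` and satisfies
`#T + ∑ B, (|B| - 2) / 2 > card ι / 2`.

`T` is a basis of the column space modulo `2`. Every row receives charge at least `1` from the
blocks, while a block pays at most its size (in `T`) or its size minus two (off `T`); this gives the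
weak inequality. In the case of equality the columns in `T` are disjoint `0`-`1` vectors and the
remaining blocks are so constrained that some nonempty closed set of rows has at most two
elements, contradicting connectedness. -/
theorem exists_indep_columns {ι β : Type*} [Fintype ι] [Fintype β] [DecidableEq ι] [DecidableEq β]
    (m : ι → β → ℕ) (hι : 3 ≤ Fintype.card ι)
    (hcolsum : ∀ B, 2 ≤ ∑ i, m i B) (hrowsum : ∀ i, Even (∑ B, m i B))
    (hconn : ∀ S : Finset ι, S.Nonempty →
      (∀ j ∈ S, ∀ k, ∀ B, 0 < m j B → 0 < m k B → k ∈ S) → S = univ) :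
    ∃ T : Finset β,
      LinearIndepOn (ZMod 2) (fun (B : β) (i : ι) => (m i B : ZMod 2)) (T : Set β) ∧
      Fintype.card ι + 2 * Fintype.card β < 2 * #T + ∑ B, ∑ i, m i B := by
  classical
  set v : β → ι → ZMod 2 := fun B i => (m i B : ZMod 2) with hv
  obtain ⟨b, -, -, hbspan, hbind⟩ :=
    exists_linearIndepOn_extension (K := ZMod 2) (v := v) (linearIndepOn_empty (ZMod 2) v)
      (Set.empty_subset Set.univ)
  lift b to Finset β using Set.toFinite b
  rename' b => T
  refine ⟨T, hbind, ?_⟩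
  have hspan : ∀ B, ∃ c : β → ZMod 2, ∀ i, ∑ C ∈ T, c C * v C i = v B i := by
    intro B
    obtain ⟨c, hc⟩ := (Submodule.mem_span_image_finset_iff_exists_fun (ZMod 2)).1
      (hbspan ⟨B, Set.mem_univ _, rfl⟩)
    refine ⟨fun C => if h : C ∈ T then c ⟨C, h⟩ else 0, fun i => ?_⟩
    rw [← hc, ← sum_coe_sort]
    simp
  have hodd : ∀ i B, v B i ≠ 0 ↔ Odd (m i B) := by
    intro i B
    rw [hv, Ne, ZMod.natCast_eq_zero_iff_even, Nat.not_even_iff_odd]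
  by_contra hcon
  push Not at hcon
  -- `g i B` is the charge paid by block `B` to row `i`: the whole multiplicity if `B ∈ T`, and
  -- otherwise one unit if `i` vanishes modulo `2` and shares `B` with another row.
  set g : ι → β → ℕ := fun i B => if B ∈ T then m i B else
    if (∀ B', Even (m i B')) ∧ 0 < m i B ∧ ∃ k, k ≠ i ∧ 0 < m k B then 1 else 0 with hg
  set s : β → ℕ := fun B => ∑ i, m i B with hs
  set w : β → ℕ := fun B => if B ∈ T then s B else s B - 2 with hw
  have hcon' : 2 * #T + ∑ B, s B ≤ Fintype.card ι + 2 * Fintype.card β := hcon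
  have hgT : ∀ i, ∀ B ∈ T, g i B = m i B := fun i B hB => by simp [hg, hB]
  have hwT : ∀ B ∉ T, w B + 2 = s B := fun B hB => by
    have := hcolsum B
    simp only [hw, hB, if_false, hs]
    omega
  -- off the basis, a charged row occupies at least two positions of the block
  have hgm : ∀ i, ∀ B ∉ T, 2 * g i B ≤ m i B := by
    intro i B hB
    simp only [hg, hB, if_false]
    split_ifs with h
    · obtain ⟨q, hq⟩ := h.1 B
      omega
    · simp
  have hgpos : ∀ i k B, (∀ B', Even (m i B')) → k ≠ i → 0 < m i B → 0 < m k B → 0 < g i B := by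
    intro i k B hZ hk hi hkB
    by_cases hB : B ∈ T
    · rwa [hgT i B hB]
    · simp only [hg, hB, if_false]
      rw [if_pos ⟨hZ, hi, k, hk, hkB⟩]
      exact one_pos
  have hgshared : ∀ i, ∀ B ∉ T, 0 < g i B →
      (∀ B', Even (m i B')) ∧ 0 < m i B ∧ ∃ k, k ≠ i ∧ 0 < m k B := by
    intro i B hB h
    by_contra h'
    simp only [hg, hB, if_false, if_neg h'] at h
    exact lt_irrefl _ h
  have hg1 : ∀ i, ∀ B ∉ T, g i B ≤ 1 := by
    intro i B hB
    simp only [hg, hB, if_false]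
    split_ifs <;> simp
  have hcol_le : ∀ B, ∑ i, g i B ≤ w B := by
    intro B
    by_cases hB : B ∈ T
    · simp only [hw, hB, if_true, hs]
      exact sum_le_sum fun i _ => (hgT i B hB).le
    have hwB := hwT B hB
    suffices h : ∑ i, g i B + 2 ≤ s B ∨ ∑ i, g i B = 0 by omega
    by_cases h0 : ∃ i, 0 < g i B
    · left
      obtain ⟨i, hi⟩ := h0
      obtain ⟨-, hmi, k, hki, hmk⟩ := hgshared i B hB hi
      -- rows `i` and `k` each leave one position beyond the charge
      have hpt : ∀ x ∈ univ, g x B + ((if x = i then 1 else 0) + (if x = k then 1 else 0)) ≤ m x B := by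
        intro x _
        have h1 := hgm x B hB
        have h2 := hg1 x B hB
        by_cases hxi : x = i
        · subst hxi
          rw [if_pos rfl, if_neg (Ne.symm hki)]
          omega
        · rw [if_neg hxi]
          by_cases hxk : x = k
          · subst hxk
            rw [if_pos rfl]
            omega
          · rw [if_neg hxk]
            omega
      have := sum_le_sum hpt
      simpa [sum_add_distrib, hs] using this
    · right
      push Not at h0
      exact sum_eq_zero fun i _ => Nat.le_zero.1 (h0 i)
  have hrow_ge : ∀ i, 1 ≤ ∑ B, g i B := by
    intro i
    suffices h : ∃ B, 0 < g i B by
      obtain ⟨B, hB⟩ := h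
      exact le_trans hB (single_le_sum (f := fun B => g i B) (fun _ _ => Nat.zero_le _) (mem_univ B))
    by_cases hZ : ∀ B', Even (m i B')
    · by_contra hno
      have : ({i} : Finset ι) = univ := by
        refine hconn {i} (singleton_nonempty i) ?_
        intro j hj k B hjB hkB
        rw [mem_singleton] at hj ⊢
        subst hj
        by_contra hk
        exact hno ⟨B, hgpos j k B hZ hk hjB hkB⟩
      have := congrArg card this
      rw [card_singleton, card_univ] at this
      omega
    · push Not at hZ
      obtain ⟨B, hB⟩ := hZ
      obtain ⟨c, hc⟩ := hspan B
      have hne : ∑ C ∈ T, c C * v C i ≠ 0 := by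
        rw [hc i, hodd]
        exact Nat.not_even_iff_odd.1 hB
      obtain ⟨C, hC, hC'⟩ := exists_ne_zero_of_sum_ne_zero hne
      refine ⟨C, ?_⟩
      rw [hgT i C hC]
      exact ((hodd i C).1 (right_ne_zero_of_mul hC')).pos
  have hwsum : ∑ B, w B + 2 * (Fintype.card β) = ∑ B, s B + 2 * #T := by
    have : ∀ B ∈ univ, w B + 2 = s B + 2 * (if B ∈ T then 1 else 0) := by
      intro B _
      by_cases hB : B ∈ T
      · simp [hw, hB]
      · simpa [hB] using hwT B hB
    have := sum_congr rfl this
    simpa [sum_add_distrib, ← mul_sum, mul_comm] using this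
  have hle1 : Fintype.card ι ≤ ∑ i, ∑ B, g i B := by
    have := sum_le_sum (s := univ) fun i _ => hrow_ge i
    simpa using this
  have hle2 : ∑ i, ∑ B, g i B ≤ ∑ B, w B := by
    rw [sum_comm]
    exact sum_le_sum fun B _ => hcol_le B
  -- The failure of the claim forces equality in every row and every column estimate.
  have hrow : ∀ i, ∑ B, g i B = 1 := by
    have h := (sum_eq_sum_iff_of_le (s := univ) (fun i _ => hrow_ge i)).1
      (by simp only [sum_const, card_univ, smul_eq_mul, mul_one]; omega)
    exact fun i => (h i (mem_univ i)).symm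
  have hcol : ∀ B, ∑ i, g i B = w B := by
    have h := (sum_eq_sum_iff_of_le (s := univ) (fun B _ => hcol_le B)).1
      (by rw [sum_comm]; omega)
    exact fun B => h B (mem_univ B)
  have huniq : ∀ i B B', 0 < g i B → 0 < g i B' → B = B' := by
    intro i B B' h h'
    by_contra hne
    have := sum_le_sum_of_subset (f := fun B => g i B) (subset_univ {B, B'})
    rw [sum_pair hne, hrow i] at this
    omega
  have hgle : ∀ i B, g i B ≤ 1 := fun i B =>
    (single_le_sum (f := fun B => g i B) (fun _ _ => Nat.zero_le _) (mem_univ B)).trans (hrow i).le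
  have hcolle : ∀ i B, m i B ≤ s B := fun i B =>
    single_le_sum (f := fun i => m i B) (fun _ _ => Nat.zero_le _) (mem_univ i)
  by_cases hNZ : ∃ i B, Odd (m i B)
  · -- an off-basis column odd in a row of `C` contains, hence equals, the column `C`
    have key : ∀ B ∉ T, ∀ j, ∀ C ∈ T, 0 < m j C → Odd (m j B) →
        s C = 2 ∧ ∀ k, m k C = m k B := by
      intro B hB j C hC hjC hjB
      obtain ⟨c, hc⟩ := hspan B
      have hone : ∀ k, 0 < m k C → v B k = c C := by
        intro k hk
        have h1 : m k C = 1 := by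
          have := hgle k C
          rw [hgT k C hC] at this
          omega
        rw [← hc k, sum_eq_single_of_mem C hC]
        · simp [hv, h1]
        · intro C' hC' hne
          have : m k C' = 0 := by
            by_contra h0
            refine hne (huniq k C' C ?_ ?_)
            · rw [hgT k C' hC']; omega
            · rwa [hgT k C hC]
          simp [hv, this]
      have hcC : c C ≠ 0 := by
        rw [← hone j hjC]
        exact (hodd j B).2 hjB
      have hpt : ∀ k ∈ univ, m k C + 2 * g k B ≤ m k B := by
        intro k _
        by_cases hk : 0 < m k C
        · have hkodd : Odd (m k B) := by
            rw [← hodd, hone k hk]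
            exact hcC
          have h1 := hgle k C
          rw [hgT k C hC] at h1
          have h2 : g k B = 0 := by
            by_contra h0
            have := (hgshared k B hB (Nat.pos_of_ne_zero h0)).1 B
            exact (Nat.not_even_iff_odd.2 hkodd) this
          have := hkodd.pos
          omega
        · have := hgm k B hB
          omega
      have hsum : s C + 2 * w B ≤ s B := by
        have := sum_le_sum hpt
        rwa [sum_add_distrib, ← mul_sum, hcol B] at this
      have h1 := hwT B hB
      have h2 : 2 ≤ s C := hcolsum C
      have hsC : s C = s B := by omega
      refine ⟨by omega, fun k => ?_⟩
      exact (sum_eq_sum_iff_of_le (s := univ) (f := fun k => m k C) (g := fun k => m k B)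
        (fun k hk => le_trans (Nat.le_add_right _ _) (hpt k hk))).1 hsC k (mem_univ k)
    obtain ⟨i, B₀, hB₀⟩ := hNZ
    obtain ⟨C, hC, hiC⟩ : ∃ C ∈ T, 0 < m i C := by
      obtain ⟨c, hc⟩ := hspan B₀
      have hne : ∑ C ∈ T, c C * v C i ≠ 0 := by
        rw [hc i, hodd]
        exact hB₀
      obtain ⟨C, hC, hC'⟩ := exists_ne_zero_of_sum_ne_zero hne
      exact ⟨C, hC, ((hodd i C).1 (right_ne_zero_of_mul hC')).pos⟩
    have hm1 : ∀ j, 0 < m j C → m j C = 1 := by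
      intro j hj
      have := hgle j C
      rw [hgT j C hC] at this
      omega
    -- the row sum is even, so a second odd entry exists, necessarily off the basis
    obtain ⟨B₁, hB₁T, hB₁⟩ : ∃ B ∉ T, Odd (m i B) := by
      by_contra hno
      push Not at hno
      have hrest : Even (∑ B ∈ univ.erase C, m i B) := by
        refine Finset.even_sum _ fun B hB => ?_
        by_cases hBT : B ∈ T
        · have : m i B = 0 := by
            by_contra h0
            refine (mem_erase.1 hB).1 (huniq i B C ?_ ?_)
            · rw [hgT i B hBT]; omega
            · rwa [hgT i C hC]
          simp [this]
        · exact Nat.not_odd_iff_even.1 (hno B hBT)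
      have h := hrowsum i
      rw [← add_sum_erase _ _ (mem_univ C), hm1 i hiC] at h
      have := (Nat.even_add.1 h).2 hrest
      exact absurd this (by decide)
    have hsC : s C = 2 := (key B₁ hB₁T i C hC hiC hB₁).1
    -- The rows meeting `C` are closed under sharing a block, and there are only two of them.
    have huniv : ({k | 0 < m k C} : Finset ι) = univ := by
      refine hconn _ ⟨i, by simpa using hiC⟩ ?_
      intro j hj k B hjB hkB
      simp only [mem_filter, mem_univ, true_and] at hj ⊢
      by_cases hBT : B ∈ T
      · have : B = C := huniq j B C (by rwa [hgT j B hBT]) (by rwa [hgT j C hC])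
        rwa [← this]
      by_cases hjodd : Odd (m j B)
      · rwa [(key B hBT j C hC hj hjodd).2 k]
      by_cases hkj : k = j
      · rwa [hkj]
      exfalso
      have hgj : g j B = 0 := by
        by_contra h0
        have := (hgshared j B hBT (Nat.pos_of_ne_zero h0)).1 C
        rw [hm1 j hj] at this
        exact absurd this (by decide)
      have hmj : 2 ≤ m j B := by
        obtain ⟨q, hq⟩ := Nat.not_odd_iff_even.1 hjodd
        omega
      have hpt : ∀ x ∈ univ, 2 * g x B + (if x = j then 2 else 0) ≤ m x B := by
        intro x _
        by_cases hx : x = j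
        · subst hx
          simp only [if_true]
          omega
        · simpa [hx] using hgm x B hBT
      have hsum : 2 * w B + 2 ≤ s B := by
        have := sum_le_sum hpt
        rw [sum_add_distrib, ← mul_sum, hcol B] at this
        simpa using this
      have hpair : m j B + m k B ≤ s B := by
        have := sum_le_sum_of_subset (f := fun x => m x B) (subset_univ {j, k})
        rwa [sum_pair (Ne.symm hkj)] at this
      have := hwT B hBT
      omega
    have hcard : #({k | 0 < m k C} : Finset ι) ≤ s C := by
      rw [card_filter]
      refine sum_le_sum fun k _ => ?_
      split_ifs with h
      · exact h
      · exact Nat.zero_le _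
    rw [huniv, card_univ] at hcard
    omega
  · push Not at hNZ
    have hZ : ∀ i B, Even (m i B) := fun i B => Nat.not_odd_iff_even.1 (hNZ i B)
    obtain ⟨i⟩ : Nonempty ι := Fintype.card_pos_iff.1 (by omega)
    obtain ⟨B, -, hB⟩ := exists_ne_zero_of_sum_ne_zero (ne_of_eq_of_ne (hrow i) one_ne_zero)
    have hBT : B ∉ T := by
      intro hBT
      have h1 := hgle i B
      have h2 : g i B = 1 := by omega
      rw [hgT i B hBT] at h2
      have := hZ i B
      rw [h2] at this
      exact absurd this (by decide)
    -- Each row has `B` as its only shared block, so the rows charged by `B` form a closed set.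
    have huniv : ({k | 0 < g k B} : Finset ι) = univ := by
      refine hconn _ ⟨i, by simpa using Nat.pos_of_ne_zero hB⟩ ?_
      intro j hj k B' hjB hkB
      simp only [mem_filter, mem_univ, true_and] at hj ⊢
      by_cases hkj : k = j
      · rwa [hkj]
      have : B' = B := huniq j B' B (hgpos j k B' (hZ j) hkj hjB hkB) hj
      subst this
      exact hgpos k j B' (hZ k) (Ne.symm hkj) hkB hjB
    have hcard : #({k | 0 < g k B} : Finset ι) ≤ w B := by
      rw [card_filter, ← hcol B]
      refine sum_le_sum fun k _ => ?_
      split_ifs with h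
      · exact h
      · exact Nat.zero_le _
    rw [huniv, card_univ] at hcard
    have hsum : 2 * w B ≤ s B := by
      have := sum_le_sum (s := univ) fun k _ => hgm k B hBT
      rwa [← mul_sum, hcol B] at this
    have := hwT B hBT
    omega

/-! ### Equality patterns of tuples -/

open scoped Classical in
/-- The number of positions of row `i` lying in the block `B` of the partition `s` of the set of
all positions `(i, k)`. -/
noncomputable def blockCount {l : ℕ} {p : Fin l → ℕ} (s : Setoid (Σ i : Fin l, Fin (2 * p i)))
    (i : Fin l) (B : Quotient s) : ℕ :=
  #{k : Fin (2 * p i) | (⟦⟨i, k⟩⟧ : Quotient s) = B}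

open scoped Classical in
/-- The coefficient of the common value of the block `B` in the alternating sum of row `i`, when
the entries are constant on the blocks of `s`. -/
noncomputable def blockCoeff {l : ℕ} {p : Fin l → ℕ} (s : Setoid (Σ i : Fin l, Fin (2 * p i)))
    (i : Fin l) (B : Quotient s) : ℤ :=
  ∑ k : Fin (2 * p i) with (⟦⟨i, k⟩⟧ : Quotient s) = B, (-1 : ℤ) ^ ((k : ℕ) + 1)

theorem blockCoeff_cast {l : ℕ} {p : Fin l → ℕ} (s : Setoid (Σ i : Fin l, Fin (2 * p i)))
    (i : Fin l) (B : Quotient s) :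
    (blockCoeff s i B : ZMod 2) = (blockCount s i B : ZMod 2) := by
  have h : (-1 : ZMod 2) = 1 := by decide
  simp [blockCoeff, blockCount, h]

/-- The equality pattern of a tuple: two positions are related when they carry equal entries. -/
def pattern {l : ℕ} {p : Fin l → ℕ} (J : ∀ i : Fin l, Fin (2 * p i) → ℕ) :
    Setoid (Σ i : Fin l, Fin (2 * p i)) :=
  Setoid.ker fun a => J a.1 a.2

theorem pattern_mk_eq {l : ℕ} {p : Fin l → ℕ} (J : ∀ i : Fin l, Fin (2 * p i) → ℕ)
    (a b : Σ i : Fin l, Fin (2 * p i)) :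
    (⟦a⟧ : Quotient (pattern J)) = ⟦b⟧ ↔ J a.1 a.2 = J b.1 b.2 := by
  rw [Quotient.eq]
  rfl

theorem blockCount_rowsum {l : ℕ} {p : Fin l → ℕ} (s : Setoid (Σ i : Fin l, Fin (2 * p i)))
    [Fintype (Quotient s)] (i : Fin l) : ∑ B, blockCount s i B = 2 * p i := by
  classical
  have := card_eq_sum_card_fiberwise (s := (univ : Finset (Fin (2 * p i))))
    (t := (univ : Finset (Quotient s))) (f := fun k => ⟦⟨i, k⟩⟧) (fun _ _ => by simp)
  rw [card_univ, Fintype.card_fin] at this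
  rw [this]
  refine sum_congr rfl fun B _ => ?_
  unfold blockCount
  congr!

theorem count_entries {l : ℕ} {p : Fin l → ℕ} (J : ∀ i : Fin l, Fin (2 * p i) → ℕ)
    (a : Σ i : Fin l, Fin (2 * p i)) :
    (∑ i : Fin l, entriesM (J i)).count (J a.1 a.2) = ∑ i, blockCount (pattern J) i ⟦a⟧ := by
  classical
  rw [Multiset.count_sum']
  refine sum_congr rfl fun i _ => ?_
  rw [entriesM, Multiset.count_map, blockCount, card_def, filter_val]
  congr 1
  refine Multiset.filter_congr fun k _ => ?_
  rw [pattern_mk_eq]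
  exact eq_comm

theorem blockCount_pos {l : ℕ} {p : Fin l → ℕ} (s : Setoid (Σ i : Fin l, Fin (2 * p i)))
    (i : Fin l) (B : Quotient s) :
    0 < blockCount s i B ↔ ∃ k : Fin (2 * p i), (⟦⟨i, k⟩⟧ : Quotient s) = B := by
  classical
  rw [blockCount, card_pos]
  constructor
  · rintro ⟨k, hk⟩
    exact ⟨k, (mem_filter.1 hk).2⟩
  · rintro ⟨k, hk⟩
    exact ⟨k, mem_filter.2 ⟨mem_univ _, hk⟩⟩

/-- A nonempty set of rows that is closed under sharing a block with another row is everything: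
this is the form in which connectedness of the cluster graph is used. -/
theorem cluster_closed {l : ℕ} {p : Fin l → ℕ} (J : ∀ i : Fin l, Fin (2 * p i) → ℕ)
    (hJ : IsCluster J) (S : Finset (Fin l)) (hS : S.Nonempty)
    (hcl : ∀ j ∈ S, ∀ k, ∀ B, 0 < blockCount (pattern J) j B → 0 < blockCount (pattern J) k B →
      k ∈ S) : S = univ := by
  have hstep : ∀ j ∈ S, ∀ k, (∃ a b, J j a = J k b) → k ∈ S := by
    rintro j hj k ⟨a, b, hab⟩
    refine hcl j hj k ⟦⟨j, a⟩⟧ ((blockCount_pos _ _ _).2 ⟨a, rfl⟩) ((blockCount_pos _ _ _).2 ⟨b, ?_⟩)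
    rw [pattern_mk_eq]
    exact hab.symm
  obtain ⟨i, hi⟩ := hS
  refine eq_univ_of_forall fun k => ?_
  obtain ⟨q⟩ := hJ.preconnected i k
  induction q with
  | nil => exact hi
  | cons h _ ih =>
    refine ih (hstep _ hi _ ?_)
    rcases h.2 with ⟨a, b, hab⟩ | ⟨a, b, hab⟩
    · exact ⟨a, b, hab⟩
    · exact ⟨b, a, hab.symm⟩

theorem mem_BP {n l : ℕ} {p : Fin l → ℕ} {J : ∀ i : Fin l, Fin (2 * p i) → ℕ} (h : J ∈ BP n p) :
    (∀ i, memA2p n (p i) (J i)) ∧ IsCluster J ∧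
      ∀ v ∈ ∑ i : Fin l, entriesM (J i), 2 ≤ (∑ i : Fin l, entriesM (J i)).count v := by
  classical
  unfold BP at h
  simp only [mem_filter] at h
  exact h.2

open scoped Classical in
/-- A tuple with pattern `s` is determined by its block values, which can be read modulo `n` since
entries lie in `{1, …, n}`; these values solve the linear system with matrix `blockCoeff s`. -/
theorem card_pattern_le {n l : ℕ} [NeZero n] {p : Fin l → ℕ}
    (s : Setoid (Σ i : Fin l, Fin (2 * p i))) [Fintype (Quotient s)] :
    #{J ∈ BP n p | pattern J = s} ≤
      #{x : Quotient s → ZMod n | ∀ i, ∑ B, (blockCoeff s i B : ZMod n) * x B = 0} := by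
  have hout : ∀ J : (∀ i : Fin l, Fin (2 * p i) → ℕ), pattern J = s →
      ∀ i k, J (⟦⟨i, k⟩⟧ : Quotient s).out.1 (⟦⟨i, k⟩⟧ : Quotient s).out.2 = J i k := by
    rintro J rfl i k
    exact (pattern_mk_eq J _ _).1 (Quotient.out_eq _)
  refine card_le_card_of_injOn (fun J B => (J B.out.1 B.out.2 : ZMod n)) ?_ ?_
  · intro J hJ
    obtain ⟨hJ, hs⟩ := mem_filter.1 hJ
    refine mem_coe.2 (mem_filter.2 ⟨mem_univ _, fun i => ?_⟩)
    have h0 : ((∑ k : Fin (2 * p i), (-1 : ℤ) ^ ((k : ℕ) + 1) * (J i k : ℤ) : ℤ) : ZMod n) = 0 :=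
      (ZMod.intCast_zmod_eq_zero_iff_dvd _ _).2 (Int.dvd_of_emod_eq_zero ((mem_BP hJ).1 i).2)
    rw [← h0, ← sum_fiberwise univ (fun k : Fin (2 * p i) => (⟦⟨i, k⟩⟧ : Quotient s))]
    push_cast
    refine sum_congr rfl fun B _ => ?_
    simp only [blockCoeff]
    push_cast
    rw [sum_mul]
    refine sum_congr rfl fun k hk => ?_
    rw [← (mem_filter.1 hk).2, hout J hs i k]
  · intro J hJ J' hJ' h
    obtain ⟨hJ, hs⟩ := mem_filter.1 hJ
    obtain ⟨hJ', hs'⟩ := mem_filter.1 hJ'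
    funext i k
    have h1 := congrFun h ⟦⟨i, k⟩⟧
    simp only [hout J hs, hout J' hs'] at h1
    have b1 := mem_Icc.1 (((mem_BP hJ).1 i).1 k)
    have b2 := mem_Icc.1 (((mem_BP hJ').1 i).1 k)
    refine Nat.ModEq.eq_of_abs_lt ((ZMod.natCast_eq_natCast_iff _ _ _).1 h1) ?_
    rw [abs_lt]
    omega

theorem isLittleO_rpow_of_lt {a b : ℝ} (hab : a < b) :
    (fun x : ℝ => x ^ a) =o[atTop] (fun x : ℝ => x ^ b) := by
  refine isLittleO_of_tendsto' ?_ ?_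
  · filter_upwards [eventually_gt_atTop 0] with x hx h0
    exact absurd h0 (Real.rpow_pos_of_pos hx b).ne'
  · refine (tendsto_rpow_neg_atTop (sub_pos.2 hab)).congr' ?_
    filter_upwards [eventually_gt_atTop 0] with x hx
    rw [← Real.rpow_sub hx, neg_sub]

open scoped Classical in
/-- A realised pattern `s` satisfies the hypotheses of `exists_indep_columns`, so its tuples number
at most `C * n ^ e` with `2 * e + l < 2 * ∑ i, p i`; an unrealised pattern contributes nothing. -/
theorem pattern_isLittleO {l : ℕ} (hl : 3 ≤ l) (p : Fin l → ℕ)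
    (s : Setoid (Σ i : Fin l, Fin (2 * p i))) :
    (fun n : ℕ => (#{J ∈ BP n p | pattern J = s} : ℝ)) =o[atTop]
      (fun n : ℕ => (n : ℝ) ^ ((∑ i : Fin l, (p i : ℝ)) - (l : ℝ) / 2)) := by
  by_cases hex : ∃ n, ∃ J ∈ BP n p, pattern J = s
  swap
  · push Not at hex
    have : ∀ n, #{J ∈ BP n p | pattern J = s} = 0 := fun n =>
      card_eq_zero.2 (filter_eq_empty_iff.2 fun J hJ => hex n J hJ)
    simp only [this, Nat.cast_zero]
    exact isLittleO_zero _ _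
  let _ : Fintype (Quotient s) := Fintype.ofFinite _
  obtain ⟨T, hT, hcard⟩ := exists_indep_columns (blockCount s) (by simpa using hl)
    (by
      obtain ⟨n, J, hJ, rfl⟩ := hex
      intro B
      induction B using Quotient.inductionOn with
      | h a =>
        rw [← count_entries]
        refine (mem_BP hJ).2.2 _ (Multiset.mem_sum.2 ⟨a.1, mem_univ _, ?_⟩)
        exact Multiset.mem_map_of_mem _ (mem_univ_val a.2))
    (fun i => by rw [blockCount_rowsum]; exact even_two_mul _)
    (by
      obtain ⟨n, J, hJ, rfl⟩ := hex
      exact cluster_closed J (mem_BP hJ).2.1)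
  rw [sum_comm] at hcard
  simp only [blockCount_rowsum, ← mul_sum, Fintype.card_fin] at hcard
  obtain ⟨C, hC⟩ := card_sol (blockCoeff s) T (by simpa only [blockCoeff_cast] using hT)
  set e := Fintype.card (Quotient s) - #T with he
  have hTle : #T ≤ Fintype.card (Quotient s) := card_le_univ T
  have hexp : (e : ℝ) < (∑ i : Fin l, (p i : ℝ)) - (l : ℝ) / 2 := by
    have h : l + 2 * e < 2 * ∑ i, p i := by omega
    have h' : (l : ℝ) + 2 * e < 2 * ∑ i, (p i : ℝ) := by exact_mod_cast h
    linarith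
  have hO : (fun n : ℕ => (#{J ∈ BP n p | pattern J = s} : ℝ)) =O[atTop]
      (fun n : ℕ => (n : ℝ) ^ (e : ℝ)) := by
    refine IsBigO.of_bound C ?_
    filter_upwards [eventually_ge_atTop 1] with n hn
    have : NeZero n := ⟨by omega⟩
    rw [Real.rpow_natCast, Real.norm_of_nonneg (by positivity), Real.norm_of_nonneg (by positivity)]
    have h : #{J ∈ BP n p | pattern J = s} ≤ C * n ^ e := by
      refine (card_pattern_le s).trans (le_trans (le_of_eq ?_) (hC n))
      congr!
    calc ((#{J ∈ BP n p | pattern J = s} : ℕ) : ℝ) ≤ ((C * n ^ e : ℕ) : ℝ) := Nat.cast_le.2 h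
      _ = (C : ℝ) * (n : ℝ) ^ e := by push_cast; rfl
  exact hO.trans_isLittleO ((isLittleO_rpow_of_lt hexp).comp_tendsto
    tendsto_natCast_atTop_atTop)

/-- **Lemma (cluster cardinality).** For `ℓ ≥ 3` and `p_1, …, p_ℓ ≥ 1`,
`|B_{P_ℓ}| = o(n^{p_1 + ⋯ + p_ℓ - ℓ/2})` as `n → ∞`. -/
theorem card_BP_littleO (l : ℕ) (hl : 3 ≤ l) (p : Fin l → ℕ) (hp : ∀ i, 1 ≤ p i) :
    (fun n : ℕ => ((BP n p).card : ℝ)) =o[atTop]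
      (fun n : ℕ => (n : ℝ) ^ ((∑ i : Fin l, (p i : ℝ)) - (l : ℝ) / 2)) := by
  classical
  have : Finite (Setoid (Σ i : Fin l, Fin (2 * p i))) :=
    Finite.of_injective (fun s a b => s.r a b) fun s t h => Setoid.ext fun a b => by
      have := congrFun (congrFun h a) b
      exact iff_of_eq this
  let _ : Fintype (Setoid (Σ i : Fin l, Fin (2 * p i))) := Fintype.ofFinite _
  have hsum : ∀ n, ((BP n p).card : ℝ) =
      ∑ s : Setoid (Σ i : Fin l, Fin (2 * p i)), (#{J ∈ BP n p | pattern J = s} : ℝ) := by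
    intro n
    have := card_eq_sum_card_fiberwise (s := BP n p)
      (t := (univ : Finset (Setoid (Σ i : Fin l, Fin (2 * p i))))) (f := pattern)
      (fun _ _ => by simp)
    exact_mod_cast this
  simp only [hsum]
  refine IsLittleO.fun_sum fun s _ => pattern_isLittleO hl p s
end

section
/- Let p_1 = p_2 = p ≥ 1 and P_2 = (2p, 2p). Then |B_{P_2}| = O(n^{2p − 1}) as n → ∞; in particular |B_{P_2}| is not o(n^{p_1 + p_2 − 1}). -/
/-!
A pair `(J₁, J₂)` is viewed as one function `f` on the `4p` positions `Fin 2 × Fin (2p)`.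

*Upper bound.* Every value of `f` is attained at least twice, so `f` has at most `2p` distinct
values. Encode the coincidence pattern of `f` by a map `r` sending each position to a
representative of its level set; there are at most `(4p)^(4p)` patterns, independently of `n`.
For a fixed pattern, `f` is determined by its values on the range of `r`. If the range has fewer
than `2p` elements, this gives at most `n^(2p-1)` functions. If it has exactly `2p` elements, every
level set has exactly two elements, and one of them, shared by `J₁` and `J₂`, meets `J₁` in a
single position. The congruence for `J₁` then determines the common value there from
the other `2p - 1` ones (`card_pattern_le`).

*Lower bound.* All pairs `(J, J)` with `J ∈ A_{2p}` belong to `B_{P_2}`, and there are at least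
`n^(2p-1)` of them because the last entry of `J` can be chosen to satisfy the congruence, whatever
the other entries are (`pow_le_card_BP`).
-/

open Finset Filter Asymptotics
open scoped Topology

/-- The properties of the pair `(J₁, J₂)`, seen as a function on all positions, that are used for
the upper bound; only the congruence for `J₁` is kept. -/
def GoodPair (n p : ℕ) (f : Fin 2 × Fin (2 * p) → ℕ) : Prop :=
  (∀ x, f x ∈ Finset.Icc 1 n) ∧ (∀ x, 2 ≤ #{y | f y = f x}) ∧
    (∃ a b, f (0, a) = f (1, b)) ∧
    (∑ k : Fin (2 * p), (-1 : ℤ) ^ ((k : ℕ) + 1) * (f (0, k) : ℤ)) % n = 0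

/-- `r` picks one representative position in each level set of `f`. -/
def IsPattern {α : Type*} (r : α → α) (f : α → ℕ) : Prop :=
  (∀ x, f (r x) = f x) ∧ ∀ x y, f x = f y → r x = r y

lemma exists_isPattern {α : Type*} (f : α → ℕ) : ∃ r : α → α, IsPattern r f := by
  classical
  have h : ∀ x : α, ∃ y, f y = f x := fun x => ⟨x, rfl⟩
  have h' : ∀ v : ℕ, (∃ y, f y = v) → ∃ y, f y = v := fun _ => id
  refine ⟨fun x => (h' (f x) (h x)).choose, fun x => (h' (f x) (h x)).choose_spec, ?_⟩
  intro x y hxy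
  simp only [hxy]

lemma card_le_of_determined {α : Type*} (S : Finset (α → ℕ)) (n : ℕ) (R : Finset α)
    (hS : ∀ f ∈ S, ∀ x, f x ∈ Finset.Icc 1 n)
    (hinj : ∀ f ∈ S, ∀ g ∈ S, (∀ x ∈ R, f x = g x) → f = g) : #S ≤ n ^ #R := by
  classical
  have h := Finset.card_le_card_of_injOn (s := S)
    (t := Fintype.piFinset (fun _ : R => Finset.Icc 1 n)) (fun f x => f x)
    (fun f hf => by
      simp only [Finset.mem_coe, Fintype.mem_piFinset]
      exact fun x => hS f hf x)
    (fun f hf g hg hfg => hinj f hf g hg fun x hx => congrFun hfg ⟨x, hx⟩)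
  simpa using h

lemma eq_of_modEq_of_mem_Icc {n a b : ℕ} (ha : a ∈ Finset.Icc 1 n) (hb : b ∈ Finset.Icc 1 n)
    (h : (n : ℤ) ∣ (a : ℤ) - b) : a = b := by
  rw [Finset.mem_Icc] at ha hb
  have h0 : (a : ℤ) - b = 0 := Int.eq_zero_of_abs_lt_dvd h (by rw [abs_lt]; omega)
  omega

/-- For a fixed coincidence pattern there are at most `n^(2p-1)` functions. -/
lemma card_pattern_le_s9 (n p : ℕ) (hn : 1 ≤ n) (r : Fin 2 × Fin (2 * p) → Fin 2 × Fin (2 * p))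
    (S : Finset (Fin 2 × Fin (2 * p) → ℕ)) (hS : ∀ f ∈ S, GoodPair n p f ∧ IsPattern r f) :
    #S ≤ n ^ (2 * p - 1) := by
  classical
  rcases S.eq_empty_or_nonempty with rfl | ⟨f₀, hf₀⟩
  · simp
  obtain ⟨⟨-, hmul, ⟨a, b, hab⟩, -⟩, hr₁, hr₂⟩ := hS f₀ hf₀
  set R := Finset.univ.image r with hR
  have hrR : ∀ x, r x ∈ R := fun x => Finset.mem_image_of_mem _ (Finset.mem_univ x)
  have hfib : ∀ t ∈ R, 2 ≤ #{y | r y = t} := by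
    intro t ht
    obtain ⟨x, -, rfl⟩ := Finset.mem_image.1 ht
    refine (hmul x).trans (Finset.card_le_card fun y hy => ?_)
    simp only [Finset.mem_filter, Finset.mem_univ, true_and] at hy ⊢
    exact hr₂ _ _ hy
  have hsum : ∑ t ∈ R, #{y | r y = t} = 4 * p := by
    rw [← Finset.card_eq_sum_card_fiberwise (s := Finset.univ) (fun x _ => hrR x)]
    simp; ring
  have hcard : #R * 2 ≤ 4 * p := by
    rw [← hsum, ← smul_eq_mul]
    exact Finset.card_nsmul_le_sum _ _ _ hfib
  have hIcc : ∀ f ∈ S, ∀ x, f x ∈ Finset.Icc 1 n := fun f hf => (hS f hf).1.1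
  by_cases hlt : #R ≤ 2 * p - 1
  · refine (card_le_of_determined S n R hIcc ?_).trans (Nat.pow_le_pow_right hn hlt)
    intro f hf g hg hfg
    funext x
    rw [← (hS f hf).2.1 x, ← (hS g hg).2.1 x]
    exact hfg _ (hrR x)
  · have hcR : #R = 2 * p := by omega
    -- The fibre sizes are at least `2` and add up to `2 * #R`, so they are all equal to `2`.
    have hfib2 : ∀ t ∈ R, 2 = #{y | r y = t} := by
      refine (Finset.sum_eq_sum_iff_of_le hfib).1 ?_
      rw [hsum, Finset.sum_const, smul_eq_mul, hcR]; ring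
    have hrab : r (0, a) = r (1, b) := hr₂ _ _ hab
    have hne : ((0, a) : Fin 2 × Fin (2 * p)) ≠ (1, b) := by simp
    have hfa : ({(0, a), (1, b)} : Finset (Fin 2 × Fin (2 * p)))
        = Finset.univ.filter (fun y => r y = r (0, a)) := by
      refine Finset.eq_of_subset_of_card_le ?_ ?_
      · intro y hy
        simp only [Finset.mem_insert, Finset.mem_singleton] at hy
        rcases hy with rfl | rfl <;> simp [hrab]
      · rw [← hfib2 _ (hrR _), Finset.card_pair hne]
    have hE : #(R.erase (r (0, a))) = 2 * p - 1 := by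
      rw [Finset.card_erase_of_mem (hrR _), hcR]
    rw [← hE]
    refine card_le_of_determined S n _ hIcc ?_
    intro f hf g hg hfg
    have hoff : ∀ x, r x ≠ r (0, a) → f x = g x := by
      intro x hx
      rw [← (hS f hf).2.1 x, ← (hS g hg).2.1 x]
      exact hfg _ (Finset.mem_erase.2 ⟨hx, hrR x⟩)
    have hoff0 : ∀ k, k ≠ a → f (0, k) = g (0, k) := by
      intro k hk
      refine hoff _ fun h => ?_
      have : ((0, k) : Fin 2 × Fin (2 * p)) ∈ ({(0, a), (1, b)} : Finset _) := by
        rw [hfa]; simpa using h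
      simp [hk] at this
    have hfd := Int.dvd_of_emod_eq_zero (hS f hf).1.2.2.2
    have hgd := Int.dvd_of_emod_eq_zero (hS g hg).1.2.2.2
    have hd := dvd_sub hfd hgd
    rw [← Finset.sum_sub_distrib, Finset.sum_eq_single a
      (fun k _ hk => by rw [hoff0 k hk, sub_self]) (by simp), ← mul_sub] at hd
    have hu : IsUnit ((-1 : ℤ) ^ ((a : ℕ) + 1)) := (isUnit_one.neg).pow _
    have ha : f (0, a) = g (0, a) :=
      eq_of_modEq_of_mem_Icc (hIcc f hf _) (hIcc g hg _) (hu.dvd_mul_left.1 hd)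
    funext x
    by_cases hx : r x = r (0, a)
    · rw [← (hS f hf).2.1 x, ← (hS g hg).2.1 x, hx, (hS f hf).2.1, (hS g hg).2.1, ha]
    · exact hoff x hx

lemma count_sum_entriesM {p : ℕ} (J : Fin 2 → Fin (2 * p) → ℕ) (v : ℕ) :
    (∑ i : Fin 2, entriesM (J i)).count v = #{x : Fin 2 × Fin (2 * p) | J x.1 x.2 = v} := by
  classical
  rw [Multiset.count_sum', Finset.card_filter, Fintype.sum_prod_type]
  refine Finset.sum_congr rfl fun i _ => ?_
  rw [entriesM, Multiset.count_map, ← Finset.card_filter]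
  simp only [eq_comm]
  rfl

lemma isCluster_two_iff {p : ℕ} (J : Fin 2 → Fin (2 * p) → ℕ) :
    IsCluster (m := fun _ => 2 * p) J ↔ ∃ a b, J 0 a = J 1 b := by
  unfold IsCluster
  constructor
  · intro h
    obtain ⟨w⟩ := h.preconnected 0 1
    cases w with
    | @cons _ j _ hadj _ =>
      rw [SimpleGraph.fromRel_adj] at hadj
      obtain ⟨hne, hJ⟩ := hadj
      have hj : j = 1 := by omega
      subst hj
      rcases hJ with h | ⟨a, b, h⟩
      · exact h
      · exact ⟨b, a, h.symm⟩
  · intro h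
    have hadj : (SimpleGraph.fromRel fun i j : Fin 2 => ∃ a b, J i a = J j b).Adj 0 1 := by
      rw [SimpleGraph.fromRel_adj]
      exact ⟨by simp, Or.inl h⟩
    refine ⟨fun i j => ?_⟩
    fin_cases i <;> fin_cases j
    · exact SimpleGraph.Reachable.refl _
    · exact hadj.reachable
    · exact hadj.symm.reachable
    · exact SimpleGraph.Reachable.refl _

lemma mem_BP_two_iff {n p : ℕ} (J : Fin 2 → Fin (2 * p) → ℕ) :
    J ∈ BP n (fun _ : Fin 2 => p) ↔ (∀ i, memA2p n p (J i)) ∧ (∃ a b, J 0 a = J 1 b) ∧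
      ∀ x : Fin 2 × Fin (2 * p), 2 ≤ #{y : Fin 2 × Fin (2 * p) | J y.1 y.2 = J x.1 x.2} := by
  classical
  have hmem : (∀ v ∈ ∑ i : Fin 2, entriesM (J i), 2 ≤ (∑ i : Fin 2, entriesM (J i)).count v) ↔
      ∀ x : Fin 2 × Fin (2 * p), 2 ≤ #{y : Fin 2 × Fin (2 * p) | J y.1 y.2 = J x.1 x.2} := by
    simp only [count_sum_entriesM]
    constructor
    · intro h x
      refine h _ ?_
      rw [Multiset.mem_sum]
      exact ⟨x.1, Finset.mem_univ _, Multiset.mem_map_of_mem _ (Finset.mem_univ x.2)⟩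
    · intro h v hv
      rw [Multiset.mem_sum] at hv
      obtain ⟨i, -, hi⟩ := hv
      obtain ⟨k, -, rfl⟩ := Multiset.mem_map.1 hi
      exact h (i, k)
  rw [← hmem, ← isCluster_two_iff, BP, Finset.mem_filter]
  refine ⟨fun h => h.2, fun h => ⟨?_, h⟩⟩
  rw [Fintype.mem_piFinset]
  intro i
  rw [Fintype.mem_piFinset]
  exact (h.1 i).1

lemma card_BP_le (n p : ℕ) (hn : 1 ≤ n) :
    #(BP n (fun _ : Fin 2 => p)) ≤
      Fintype.card (Fin 2 × Fin (2 * p) → Fin 2 × Fin (2 * p)) * n ^ (2 * p - 1) := by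
  classical
  let u : (Fin 2 → Fin (2 * p) → ℕ) → (Fin 2 × Fin (2 * p) → ℕ) := fun J x => J x.1 x.2
  have hu : Function.Injective u := fun J K h => by
    funext i k
    exact congrFun h (i, k)
  let S : Finset (Fin 2 × Fin (2 * p) → ℕ) := (BP n (fun _ : Fin 2 => p)).image u
  have hcard : #S = #(BP n (fun _ : Fin 2 => p)) := Finset.card_image_of_injective _ hu
  have hS : ∀ f ∈ S, GoodPair n p f := by
    intro f hf
    obtain ⟨J, hJ, rfl⟩ := Finset.mem_image.1 hf
    obtain ⟨h1, h2, h3⟩ := (mem_BP_two_iff J).1 hJ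
    exact ⟨fun x => (h1 x.1).1 x.2, h3, h2, (h1 0).2⟩
  have hsub : S ⊆ Finset.univ.biUnion fun r => S.filter (IsPattern r) := by
    intro f hf
    obtain ⟨r, hr⟩ := exists_isPattern f
    exact Finset.mem_biUnion.2 ⟨r, Finset.mem_univ _, Finset.mem_filter.2 ⟨hf, hr⟩⟩
  rw [← hcard]
  refine (Finset.card_le_card hsub).trans (Finset.card_biUnion_le_card_mul _ _ _ fun r _ => ?_)
  refine card_pattern_le_s9 n p hn r _ fun f hf => ?_
  rw [Finset.mem_filter] at hf
  exact ⟨hS f hf.1, hf.2⟩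

lemma exists_mem_Icc_dvd (n : ℕ) (hn : 1 ≤ n) (z : ℤ) :
    ∃ c ∈ Finset.Icc 1 n, (n : ℤ) ∣ z + c := by
  have hn' : (0 : ℤ) < n := by exact_mod_cast hn
  -- The residue of `-z - 1` lies in `{0, …, n - 1}`, so its successor lies in `{1, …, n}`.
  have h0 := Int.emod_nonneg (-z - 1) hn'.ne'
  have h1 := Int.emod_lt_of_pos (-z - 1) hn'
  refine ⟨((-z - 1) % n).toNat + 1, ?_, ?_⟩
  · rw [Finset.mem_Icc]; omega
  · push_cast
    rw [Int.toNat_of_nonneg h0]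
    have h2 := Int.emod_add_mul_ediv (-z - 1) n
    exact ⟨-((-z - 1) / n), by linear_combination h2⟩

lemma pow_le_card_BP (n p : ℕ) (hn : 1 ≤ n) (hp : 1 ≤ p) :
    n ^ (2 * p - 1) ≤ #(BP n (fun _ : Fin 2 => p)) := by
  classical
  obtain ⟨q, rfl⟩ : ∃ q, p = q + 1 := ⟨p - 1, by omega⟩
  choose c hc hcd using exists_mem_Icc_dvd n hn
  let last (g : Fin (2 * q + 1) → ℕ) : ℕ :=
    c (∑ k : Fin (2 * q + 1), (-1 : ℤ) ^ ((k : ℕ) + 1) * (g k : ℤ))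
  let J (g : Fin (2 * q + 1) → ℕ) : Fin (2 * (q + 1)) → ℕ :=
    Fin.snoc (n := 2 * q + 1) (α := fun _ => ℕ) g (last g)
  have hJ : ∀ g, (∀ k, g k ∈ Finset.Icc 1 n) → memA2p n (q + 1) (J g) := by
    intro g hg
    refine ⟨fun k => ?_, Int.emod_eq_zero_of_dvd ?_⟩
    · refine Fin.lastCases (n := 2 * q + 1)
        (motive := fun k => J g k ∈ Finset.Icc 1 n) ?_ (fun k => ?_) k
      · simpa only [J, Fin.snoc_last] using hc _
      · simpa only [J, Fin.snoc_castSucc] using hg k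
    · change (n : ℤ) ∣ ∑ k : Fin (2 * q + 1 + 1), (-1 : ℤ) ^ ((k : ℕ) + 1) * (J g k : ℤ)
      rw [Fin.sum_univ_castSucc]
      simp only [J, Fin.snoc_castSucc, Fin.snoc_last, Fin.val_castSucc, Fin.val_last]
      -- The last position is the even number `2p`, so its sign is `+1`.
      have hs : (-1 : ℤ) ^ (2 * q + 1 + 1) = 1 := Even.neg_one_pow ⟨q + 1, by ring⟩
      rw [hs, one_mul]
      exact hcd _
  have h := Finset.card_le_card_of_injOn
    (s := Fintype.piFinset (fun _ : Fin (2 * q + 1) => Finset.Icc 1 n))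
    (t := BP n (fun _ : Fin 2 => q + 1)) (fun g _ => J g) ?_ ?_
  · have he : 2 * (q + 1) - 1 = 2 * q + 1 := by omega
    rw [he]
    simpa using h
  · intro g hg
    rw [Finset.mem_coe, Fintype.mem_piFinset] at hg
    rw [Finset.mem_coe]
    refine (mem_BP_two_iff (fun _ => J g)).2 ⟨fun _ => hJ g hg, ⟨0, 0, rfl⟩, fun x => ?_⟩
    have hne : ((0, x.2) : Fin 2 × Fin (2 * (q + 1))) ≠ (1, x.2) := by simp
    refine (Finset.card_pair hne).ge.trans (Finset.card_le_card fun y hy => ?_)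
    simp only [Finset.mem_insert, Finset.mem_singleton] at hy
    rcases hy with rfl | rfl <;> simp
  · intro g _ g' _ h
    have h0 : J g = J g' := congrFun h 0
    funext k
    have hk := congrFun h0 (Fin.castSucc (n := 2 * q + 1) k)
    simpa only [J, Fin.snoc_castSucc] using hk

/-- **Remark (ℓ = 2 case).** For `p_1 = p_2 = p ≥ 1`, `|B_{P_2}| = O(n^{2p-1})` but
`|B_{P_2}|` is *not* `o(n^{p_1+p_2-1}) = o(n^{2p-1})`. -/
theorem card_BP_two (p : ℕ) (hp : 1 ≤ p) :
    ((fun n : ℕ => ((BP n (fun _ : Fin 2 => p)).card : ℝ)) =O[atTop]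
      (fun n : ℕ => (n : ℝ) ^ (2 * p - 1))) ∧
    ¬ ((fun n : ℕ => ((BP n (fun _ : Fin 2 => p)).card : ℝ)) =o[atTop]
      (fun n : ℕ => (n : ℝ) ^ (p + p - 1))) := by
  constructor
  · refine IsBigO.of_bound
      (Fintype.card (Fin 2 × Fin (2 * p) → Fin 2 × Fin (2 * p)) : ℝ) ?_
    filter_upwards [eventually_ge_atTop 1] with n hn
    rw [Real.norm_of_nonneg (by positivity), Real.norm_of_nonneg (by positivity)]
    exact_mod_cast card_BP_le n p hn
  · intro h
    obtain ⟨n, hle, hn⟩ :=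
      ((h.bound (c := 1 / 2) (by norm_num)).and (eventually_ge_atTop 1)).exists
    rw [Real.norm_of_nonneg (by positivity), Real.norm_of_nonneg (by positivity),
      ← two_mul] at hle
    have hge : (n : ℝ) ^ (2 * p - 1) ≤ (#(BP n (fun _ : Fin 2 => p)) : ℝ) := by
      exact_mod_cast pow_le_card_BP n p hn hp
    have hpos : (0 : ℝ) < (n : ℝ) ^ (2 * p - 1) := by
      have : (0 : ℝ) < n := by exact_mod_cast hn
      positivity
    linarith
end

section
/- Let p_1, p_2, p_3 ≥ 1 and P_3 = (2p_1, 2p_2, 2p_3). Then |B'_{P_3}| = O(n^{p_1 + p_2 + p_3 − 2}) as n → ∞; in particular |B'_{P_3}| = o(n^{p_1 + p_2 + p_3 − 3/2}). -/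
/-!
Regard a triple `J` as one function `F` on the `2(p₀ + p₁ + p₂)` positions, and write
`q = p₀ + p₁ + p₂`. Its *pattern* records which positions carry equal values; there are boundedly
many patterns. It suffices to find, for each `J` in `B'`, at most `q - 2` positions such that `J` is
determined by its pattern and its values there (`exists_determining`); the count `O(n^(q-2))`
then follows from an injection (`card_BP3'_le`).

Let `V` be the set of values of `F`. Each value has multiplicity at least two, so `|V| ≤ q`. As the
triple is a cluster and no value occurs in all three rows, there are distinct values `a`, `c` with
`a` shared by rows `i, j` and `c` shared by rows `j, k`, where `i, j, k` are distinct.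

* If `|V| ≤ q - 2`, one representative of each value suffices.
* If `|V| = q - 1`, then `a` and `c` cannot both have multiplicity at least four, so one of them
  occurs exactly once in some row; the congruence of that row, where it has coefficient `±1`,
  determines it from the other values.
* If `|V| = q`, every value has multiplicity exactly two, so `a` occurs once in row `i`, where `c`
  is absent, and `c` occurs once in row `k`, where `a` is absent. The congruences of
  rows `i` and `k` determine both `a` and `c` from the other values.
-/

open Finset Filter Asymptotics
open scoped Topology

open scoped Classical in
/-- `B'_{P_3}` : the subset of `B_{P_3}` of tuples for which every element has
cross-multiplicity (number of distinct `S_{J_i}` containing it) at most two. -/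
noncomputable def BP3' (n : ℕ) (p : Fin 3 → ℕ) :
    Finset (∀ i : Fin 3, Fin (2 * p i) → ℕ) :=
  (BP n p).filter (fun J =>
    ∀ v : ℕ, (Finset.univ.filter (fun i : Fin 3 => ∃ a, J i a = v)).card ≤ 2)

/-- The positions in a triple of tuples of lengths `2 p₀, 2 p₁, 2 p₂`; the first component is the
row. -/
abbrev Pos (p : Fin 3 → ℕ) := Σ i : Fin 3, Fin (2 * p i)

/-- A triple of tuples, viewed as a single function on positions. -/
def flat {p : Fin 3 → ℕ} (J : ∀ i : Fin 3, Fin (2 * p i) → ℕ) (x : Pos p) : ℕ := J x.1 x.2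

/-- The defining congruence of `A_{2p}` determines any one entry from the others, since entries
lie in a complete residue system and have coefficient `±1`. -/
lemma memA2p_pivot {n p : ℕ} {J J' : Fin (2 * p) → ℕ} (h : memA2p n p J) (h' : memA2p n p J')
    (x : Fin (2 * p)) (hx : ∀ y, y ≠ x → J y = J' y) : J x = J' x := by
  obtain ⟨hr, hs⟩ := h
  obtain ⟨hr', hs'⟩ := h'
  have hd : (n : ℤ) ∣ (-1 : ℤ) ^ ((x : ℕ) + 1) * ((J x : ℤ) - J' x) := by
    have := dvd_sub (Int.dvd_of_emod_eq_zero hs) (Int.dvd_of_emod_eq_zero hs')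
    rw [← Finset.sum_sub_distrib, Finset.sum_eq_single x] at this
    · rwa [← mul_sub] at this
    · intro y _ hy
      rw [hx y hy, sub_self]
    · simp
  have hd2 : (n : ℤ) ∣ (J x : ℤ) - J' x := by
    rcases neg_one_pow_eq_or ℤ ((x : ℕ) + 1) with h1 | h1
    · simpa [h1] using hd
    · rw [h1, neg_one_mul, dvd_neg] at hd
      exact hd
  have h1 := Finset.mem_Icc.1 (hr x)
  have h2 := Finset.mem_Icc.1 (hr' x)
  have := Int.eq_zero_of_abs_lt_dvd hd2 (by rw [abs_lt]; constructor <;> omega)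
  omega

lemma count_entries_s15 {p : Fin 3 → ℕ} (J : ∀ i : Fin 3, Fin (2 * p i) → ℕ) (v : ℕ) :
    (∑ i : Fin 3, entriesM (J i)).count v = #{x : Pos p | flat J x = v} := by
  have : ({x : Pos p | flat J x = v} : Finset (Pos p))
      = Finset.univ.sigma (fun i => ({a | J i a = v} : Finset (Fin (2 * p i)))) := by
    ext x
    rw [Finset.mem_filter, Finset.mem_sigma, Finset.mem_filter]
    simp only [Finset.mem_univ, true_and, flat]
  rw [this, Finset.card_sigma, Multiset.count_sum']
  refine Finset.sum_congr rfl fun i _ => ?_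
  rw [entriesM, Multiset.count_map]
  simp only [Finset.card_def, Finset.filter_val, eq_comm]

/-- A connected graph on three vertices contains a path through all of them. -/
lemma exists_path_of_connected (G : SimpleGraph (Fin 3)) (hG : G.Connected) :
    ∃ i j k, i ≠ j ∧ j ≠ k ∧ i ≠ k ∧ G.Adj i j ∧ G.Adj j k := by
  have nb : ∀ v, ∃ w, G.Adj v w := fun v => hG.preconnected.exists_adj_of_nontrivial v
  obtain ⟨u, hu⟩ := nb 0
  obtain ⟨w, hw0, hwu⟩ : ∃ w : Fin 3, w ≠ 0 ∧ w ≠ u := by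
    have : ∀ u : Fin 3, ∃ w : Fin 3, w ≠ 0 ∧ w ≠ u := by decide
    exact this u
  obtain ⟨t, ht⟩ := nb w
  have : t = 0 ∨ t = u := by
    have h1 := hu.ne
    have h2 := ht.ne
    omega
  rcases this with rfl | rfl
  · exact ⟨w, 0, u, hw0, hu.ne, hwu, ht, hu⟩
  · exact ⟨0, t, w, hu.ne, hwu.symm, hw0.symm, hu, ht.symm⟩

/-- The facts about a member of `B'` used below, in terms of positions. -/
lemma BP3'_facts {n : ℕ} {p : Fin 3 → ℕ} {J : ∀ i : Fin 3, Fin (2 * p i) → ℕ}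
    (hJ : J ∈ BP3' n p) :
    (∀ i, memA2p n (p i) (J i)) ∧
    (∀ x : Pos p, 2 ≤ #{y : Pos p | flat J y = flat J x}) ∧
    (∃ x y z w : Pos p, x.1 ≠ y.1 ∧ y.1 = z.1 ∧ z.1 ≠ w.1 ∧ x.1 ≠ w.1 ∧
      flat J x = flat J y ∧ flat J z = flat J w ∧ flat J x ≠ flat J z) := by
  classical
  simp only [BP3', BP, Finset.mem_filter] at hJ
  obtain ⟨⟨_, hA, hC, hM⟩, hX⟩ := hJ
  refine ⟨hA, fun x => ?_, ?_⟩
  · rw [← count_entries_s15]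
    apply hM
    rw [← Multiset.count_pos, count_entries_s15, Finset.card_pos]
    exact ⟨x, by simp⟩
  · obtain ⟨i, j, k, hij, hjk, hik, h1, h2⟩ := exists_path_of_connected _ hC
    have key : ∀ i j : Fin 3,
        (SimpleGraph.fromRel fun i j : Fin 3 => ∃ a b, J i a = J j b).Adj i j →
        ∃ a b, J i a = J j b := by
      intro i j h
      rw [SimpleGraph.fromRel_adj] at h
      rcases h.2 with h | ⟨a, b, h⟩
      · exact h
      · exact ⟨b, a, h.symm⟩
    obtain ⟨a, b, hab⟩ := key _ _ h1
    obtain ⟨c, d, hcd⟩ := key _ _ h2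
    refine ⟨⟨i, a⟩, ⟨j, b⟩, ⟨j, c⟩, ⟨k, d⟩, hij, rfl, hjk, hik, hab, hcd, ?_⟩
    intro hac
    have hac' : J i a = J j c := hac
    -- Otherwise the common value occurs in all three rows.
    have := hX (J i a)
    have hall : ({i, j, k} : Finset (Fin 3)) ⊆
        Finset.univ.filter (fun t : Fin 3 => ∃ b, J t b = J i a) := by
      intro t ht
      simp only [Finset.mem_insert, Finset.mem_singleton] at ht
      simp only [Finset.mem_filter, Finset.mem_univ, true_and]
      rcases ht with rfl | rfl | rfl
      · exact ⟨a, rfl⟩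
      · exact ⟨b, hab.symm⟩
      · exact ⟨d, by rw [hac', hcd]⟩
    have h3 := Finset.card_le_card hall
    rw [Finset.card_eq_three.2 ⟨i, j, k, hij, hik, hjk, rfl⟩] at h3
    omega

/-- A value shared by two rows either occurs exactly once in some row or has multiplicity at
least four. -/
lemma single_or_four {p : Fin 3 → ℕ} (F : Pos p → ℕ) (x y : Pos p) (hxy : x.1 ≠ y.1)
    (h : F x = F y) :
    (∃ u, F u = F x ∧ ∀ u' : Pos p, u'.1 = u.1 → F u' = F u → u' = u) ∨
      4 ≤ #{u | F u = F x} := by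
  classical
  by_cases hs : ∃ u, F u = F x ∧ ∀ u' : Pos p, u'.1 = u.1 → F u' = F u → u' = u
  · exact Or.inl hs
  right
  push Not at hs
  obtain ⟨x', hx1, hx2, hx3⟩ := hs x rfl
  obtain ⟨y', hy1, hy2, hy3⟩ := hs y h.symm
  have e1 : x ≠ y := fun e => hxy (by rw [e])
  have e2 : x ≠ y' := fun e => hxy (by rw [e, hy1])
  have e3 : x' ≠ y := fun e => hxy (by rw [← e, hx1])
  have e4 : x' ≠ y' := fun e => hxy (by rw [← hx1, e, hy1])
  have hc : #({x, x', y, y'} : Finset (Pos p)) = 4 := by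
    rw [Finset.card_insert_of_notMem, Finset.card_insert_of_notMem, Finset.card_pair hy3.symm]
    · simp [e3, e4]
    · simp [e1, e2, hx3.symm]
  rw [← hc]
  apply Finset.card_le_card
  intro u hu
  simp only [Finset.mem_insert, Finset.mem_singleton] at hu
  simp only [Finset.mem_filter, Finset.mem_univ, true_and]
  rcases hu with rfl | rfl | rfl | rfl
  · rfl
  · exact hx2
  · exact h.symm
  · rw [hy2, h]

/-- Each value in `W` has a representative position, and agreement of two functions with the same
pattern on these representatives propagates to all positions whose value lies in `W`. -/
lemma exists_representatives {p : Fin 3 → ℕ} (F : Pos p → ℕ) (W : Finset ℕ)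
    (hW : W ⊆ Finset.univ.image F) :
    ∃ T : Finset (Pos p), #T ≤ #W ∧ ∀ F' : Pos p → ℕ, (∀ x y, F' x = F' y ↔ F x = F y) →
      (∀ x ∈ T, F' x = F x) → ∀ x, F x ∈ W → F' x = F x := by
  classical
  have hsec : ∀ v : W, ∃ x, F x = v := fun v => by
    simpa using hW v.2
  choose s hs using hsec
  refine ⟨Finset.univ.image s, by simpa using Finset.card_image_le (s := Finset.univ) (f := s), ?_⟩
  intro F' hk hT x hx
  have h1 := hT (s ⟨F x, hx⟩) (by simp)
  have h2 := hs ⟨F x, hx⟩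
  rw [(hk x (s ⟨F x, hx⟩)).2 h2.symm, h1, h2]

lemma flat_pivot {n : ℕ} {p : Fin 3 → ℕ} {J J' : ∀ i : Fin 3, Fin (2 * p i) → ℕ}
    (h : ∀ i, memA2p n (p i) (J i)) (h' : ∀ i, memA2p n (p i) (J' i)) (u : Pos p)
    (hu : ∀ u' : Pos p, u'.1 = u.1 → u' ≠ u → flat J' u' = flat J u') :
    flat J' u = flat J u := by
  obtain ⟨i, a⟩ := u
  refine memA2p_pivot (h' i) (h i) a fun y hy => hu ⟨i, y⟩ rfl ?_
  intro e
  exact hy (by simpa using e)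

/-- A member of `B'` is determined, among members with the same pattern, by its values at some
`p₀ + p₁ + p₂ - 2` positions. -/
lemma exists_determining {n : ℕ} {p : Fin 3 → ℕ} {J : ∀ i : Fin 3, Fin (2 * p i) → ℕ}
    (hJ : J ∈ BP3' n p) :
    ∃ T : Finset (Pos p), #T ≤ p 0 + p 1 + p 2 - 2 ∧ ∀ J' ∈ BP3' n p,
      (∀ x y, flat J' x = flat J' y ↔ flat J x = flat J y) →
      (∀ x ∈ T, flat J' x = flat J x) → ∀ x, flat J' x = flat J x := by
  classical
  obtain ⟨hA, hM, x, y, z, w, hxy, hyz, hzw, hxw, Fxy, Fzw, Fxz⟩ := BP3'_facts hJ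
  set F := flat J with hF
  set V := Finset.univ.image F with hV
  have memV : ∀ u, F u ∈ V := fun u => Finset.mem_image_of_mem _ (Finset.mem_univ u)
  have hsum : ∑ v ∈ V, #{u | F u = v} = 2 * (p 0 + p 1 + p 2) := by
    rw [← Finset.card_eq_sum_card_image]
    simp [Fin.sum_univ_three]
    ring
  have h2 : ∀ v ∈ V, 2 ≤ #{u | F u = v} := by
    intro v hv
    obtain ⟨u, _, rfl⟩ := Finset.mem_image.1 hv
    exact hM u
  -- The multiplicities of the two values `F x ≠ F z`, plus two for each further value.
  have hsplit : #{u | F u = F x} + #{u | F u = F z} + 2 * (#V - 2)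
      ≤ 2 * (p 0 + p 1 + p 2) ∧ 2 ≤ #V := by
    have hsub : ({F x, F z} : Finset ℕ) ⊆ V := by
      intro v hv
      simp only [Finset.mem_insert, Finset.mem_singleton] at hv
      rcases hv with rfl | rfl <;> exact memV _
    have hc := Finset.card_le_card hsub
    rw [Finset.card_pair Fxz] at hc
    refine ⟨?_, hc⟩
    rw [← hsum, ← Finset.sum_sdiff hsub, Finset.sum_pair Fxz, add_comm]
    gcongr
    have := Finset.card_nsmul_le_sum (V \ {F x, F z}) (fun v => #{u | F u = v}) 2
      (fun v hv => h2 v (Finset.mem_sdiff.1 hv).1)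
    rw [Finset.card_sdiff_of_subset hsub, Finset.card_pair Fxz] at this
    simpa [mul_comm] using this
  obtain ⟨hsplit, hV2⟩ := hsplit
  have hx2 := hM x
  have hz2 := hM z
  by_cases hcA : #V + 2 ≤ p 0 + p 1 + p 2
  · obtain ⟨T, hT, hdet⟩ := exists_representatives F V subset_rfl
    exact ⟨T, by omega, fun J' _ hk hag u => hdet _ hk hag u (memV u)⟩
  by_cases hcB : #V + 1 ≤ p 0 + p 1 + p 2
  · obtain ⟨u, hu⟩ : ∃ u, ∀ u' : Pos p, u'.1 = u.1 → F u' = F u → u' = u := by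
      rcases single_or_four F x y hxy Fxy with ⟨u, _, hu⟩ | h4
      · exact ⟨u, hu⟩
      rcases single_or_four F z w hzw Fzw with ⟨u, _, hu⟩ | h4'
      · exact ⟨u, hu⟩
      omega
    obtain ⟨T, hT, hdet⟩ := exists_representatives F (V.erase (F u)) (Finset.erase_subset _ _)
    rw [Finset.card_erase_of_mem (memV u)] at hT
    refine ⟨T, by omega, fun J' hJ' hk hag => ?_⟩
    have hoff : ∀ t, F t ≠ F u → flat J' t = F t := fun t ht =>
      hdet _ hk hag t (Finset.mem_erase.2 ⟨ht, memV t⟩)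
    have hu' : flat J' u = F u := flat_pivot hA (BP3'_facts hJ').1 u
      fun u' hr hne => hoff u' fun e => hne (hu u' hr e)
    intro t
    by_cases ht : F t = F u
    · rw [(hk t u).2 ht, hu', ht]
    · exact hoff t ht
  · -- All multiplicities are two; only those of `F x` and `F z` matter.
    have hfx : #{u | F u = F x} = 2 := by omega
    have hfz : #{u | F u = F z} = 2 := by omega
    have hxy' : x ≠ y := fun e => hxy (by rw [e])
    have hzw' : z ≠ w := fun e => hzw (by rw [e])
    have fibx : ∀ t, F t = F x → t = x ∨ t = y := by
      have := Finset.eq_of_subset_of_card_le (s := {x, y}) (t := ({u | F u = F x} : Finset _))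
        (by intro t; simp; rintro (rfl | rfl) <;> simp [Fxy])
        (by rw [hfx, Finset.card_pair hxy'])
      intro t ht
      have h : t ∈ ({u | F u = F x} : Finset _) := by simpa using ht
      rw [← this] at h
      simpa using h
    have fibz : ∀ t, F t = F z → t = z ∨ t = w := by
      have := Finset.eq_of_subset_of_card_le (s := {z, w}) (t := ({u | F u = F z} : Finset _))
        (by intro t; simp; rintro (rfl | rfl) <;> simp [Fzw])
        (by rw [hfz, Finset.card_pair hzw'])
      intro t ht
      have h : t ∈ ({u | F u = F z} : Finset _) := by simpa using ht
      rw [← this] at h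
      simpa using h
    obtain ⟨T, hT, hdet⟩ := exists_representatives F ((V.erase (F x)).erase (F z))
      ((Finset.erase_subset _ _).trans (Finset.erase_subset _ _))
    rw [Finset.card_erase_of_mem (Finset.mem_erase.2 ⟨Fxz.symm, memV z⟩),
      Finset.card_erase_of_mem (memV x)] at hT
    refine ⟨T, by omega, fun J' hJ' hk hag => ?_⟩
    have hoff : ∀ t, F t ≠ F x → F t ≠ F z → flat J' t = F t := fun t h1 h2 =>
      hdet _ hk hag t (Finset.mem_erase.2 ⟨h2, Finset.mem_erase.2 ⟨h1, memV t⟩⟩)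
    have hA' := (BP3'_facts hJ').1
    have hx' : flat J' x = F x := by
      refine flat_pivot hA hA' x fun u hr hne => hoff u (fun e => ?_) (fun e => ?_)
      · rcases fibx u e with rfl | rfl
        · exact hne rfl
        · exact hxy hr.symm
      · rcases fibz u e with rfl | rfl
        · exact hxy (by rw [hyz, hr])
        · exact hxw hr.symm
    have hw' : flat J' w = F w := by
      refine flat_pivot hA hA' w fun u hr hne => hoff u (fun e => ?_) (fun e => ?_)
      · rcases fibx u e with rfl | rfl
        · exact hxw hr
        · exact hzw (by rw [← hyz, hr])
      · rcases fibz u e with rfl | rfl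
        · exact hzw hr
        · exact hne rfl
    intro t
    by_cases h1 : F t = F x
    · rw [(hk t x).2 h1, hx', h1]
    by_cases h3 : F t = F z
    · rw [(hk t w).2 (h3.trans Fzw), hw', h3, Fzw]
    · exact hoff t h1 h3

/-- The constant counts patterns and choices of determining positions. -/
lemma card_BP3'_le (p : Fin 3 → ℕ) (hp : ∀ i, 1 ≤ p i) :
    ∃ C : ℕ, ∀ n, #(BP3' n p) ≤ C * n ^ (p 0 + p 1 + p 2 - 2) := by
  classical
  set m := p 0 + p 1 + p 2 - 2 with hm
  refine ⟨Fintype.card (Pos p → Pos p → Prop) * Fintype.card (Fin m → Pos p), fun n => ?_⟩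
  have x0 : Pos p := ⟨0, ⟨0, by have := hp 0; omega⟩⟩
  have hex : ∀ J : BP3' n p, ∃ e : Fin m → Pos p, ∀ J' ∈ BP3' n p,
      (∀ x y, flat J' x = flat J' y ↔ flat J.1 x = flat J.1 y) →
      (∀ k, flat J' (e k) = flat J.1 (e k)) → J' = J.1 := by
    rintro ⟨J, hJ⟩
    obtain ⟨T, hT, hdet⟩ := exists_determining hJ
    obtain ⟨e, he⟩ : ∃ e : Fin m → Pos p, ∀ x ∈ T, ∃ k, e k = x := by
      refine ⟨fun k => if h : (k : ℕ) < #T then (T.equivFin.symm ⟨k, h⟩ : Pos p) else x0, ?_⟩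
      intro x hx
      refine ⟨⟨T.equivFin ⟨x, hx⟩, lt_of_lt_of_le (Fin.is_lt _) hT⟩, ?_⟩
      simp
    refine ⟨e, fun J' hJ' hk hag => ?_⟩
    have := hdet J' hJ' hk (fun x hx => by
      obtain ⟨k, rfl⟩ := he x hx
      exact hag k)
    funext i a
    exact this ⟨i, a⟩
  choose e he using hex
  let enc : BP3' n p → (Pos p → Pos p → Prop) × (Fin m → Pos p) × (Fin m → ℕ) :=
    fun J => (fun x y => flat J.1 x = flat J.1 y, e J, fun k => flat J.1 (e J k))
  have hinj : Function.Injective enc := by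
    intro J J' h
    simp only [enc, Prod.mk.injEq] at h
    obtain ⟨h1, h2, h3⟩ := h
    apply Subtype.ext
    refine he J' J.1 J.2 (fun x y => ?_) (fun k => ?_)
    · exact iff_of_eq (congrFun (congrFun h1 x) y)
    · rw [← h2]
      have := congrFun h3 k
      rwa [← h2] at this
  have hmaps : ∀ J ∈ (Finset.univ : Finset (BP3' n p)), enc J ∈
      (Finset.univ : Finset (Pos p → Pos p → Prop)) ×ˢ
        (Finset.univ : Finset (Fin m → Pos p)) ×ˢ
        Fintype.piFinset (fun _ : Fin m => Finset.Icc 1 n) := by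
    intro J _
    simp only [enc, Finset.mem_product, Finset.mem_univ, true_and, Fintype.mem_piFinset]
    intro k
    exact ((BP3'_facts J.2).1 _).1 _
  have := Finset.card_le_card_of_injOn enc hmaps hinj.injOn
  simpa [Finset.card_product, mul_assoc] using this

/-- **Base case ℓ = 3 of the cluster lemma.** For `p_1, p_2, p_3 ≥ 1`,
`|B'_{P_3}| = O(n^{p_1+p_2+p_3-2})`; in particular
`|B'_{P_3}| = o(n^{p_1+p_2+p_3-3/2})`. -/
theorem card_BP3' (p : Fin 3 → ℕ) (hp : ∀ i, 1 ≤ p i) :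
    ((fun n : ℕ => ((BP3' n p).card : ℝ)) =O[atTop]
      (fun n : ℕ => (n : ℝ) ^ (p 0 + p 1 + p 2 - 2))) ∧
    ((fun n : ℕ => ((BP3' n p).card : ℝ)) =o[atTop]
      (fun n : ℕ => (n : ℝ) ^ (((p 0 : ℝ) + p 1 + p 2) - 3 / 2))) := by
  obtain ⟨C, hC⟩ := card_BP3'_le p hp
  have hO : (fun n : ℕ => ((BP3' n p).card : ℝ)) =O[atTop]
      (fun n : ℕ => (n : ℝ) ^ (p 0 + p 1 + p 2 - 2)) := by
    refine IsBigO.of_bound C (Eventually.of_forall fun n => ?_)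
    rw [Real.norm_of_nonneg (by positivity), Real.norm_of_nonneg (by positivity)]
    exact_mod_cast hC n
  refine ⟨hO, hO.trans_isLittleO ?_⟩
  have hcast : ((p 0 + p 1 + p 2 - 2 : ℕ) : ℝ) = (p 0 : ℝ) + p 1 + p 2 - 2 := by
    have h0 := hp 0
    have h1 := hp 1
    rw [Nat.cast_sub (by omega)]
    push_cast
    ring
  refine isLittleO_of_tendsto' ?_ ?_
  · filter_upwards [eventually_gt_atTop 0] with n hn h0
    have : (0 : ℝ) < (n : ℝ) ^ ((p 0 : ℝ) + p 1 + p 2 - 3 / 2) :=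
      Real.rpow_pos_of_pos (by exact_mod_cast hn) _
    exact absurd h0 this.ne'
  · refine ((tendsto_rpow_neg_atTop (y := 1 / 2) (by norm_num)).comp
      tendsto_natCast_atTop_atTop).congr' ?_
    filter_upwards [eventually_gt_atTop 0] with n hn
    have hn' : (0 : ℝ) < n := by exact_mod_cast hn
    rw [← Real.rpow_natCast, ← Real.rpow_sub hn', hcast, Function.comp_apply]
    congr 1
    ring
end
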